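/- arXiv:1911.10634 — 2 statements merged into one kernel-verified Lean document; each statement's English description precedes it below -/
import Mathlib

section
/- For every odd prime p, the sum Σ_{n=1}^{⌊p/4⌋} (n/p) is nonnegative. -/
/-! Since `x ↦ 1 / 2 - fract x` has Fourier series `∑ sin (2πnx) / (πn)`, the indicator of
`[0, 1/4)` is, up to a constant, a difference of two such series. Weighting by `(j/p)` and summing
over `j`, the quarter sum becomes `√p / π` times the value at `s = 1` of `∑ (n/p) ρ(n) n⁻ˢ`, where
the Gauss sum `√p` or `i √p` makes `ρ` equal to `(0, 1, 0, -1)` on residues modulo `4` if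
`p ≡ 1 (mod 4)`, and to `(0, 1, 2, 1)` if `p ≡ 3 (mod 4)`. Both weights are multiplicative, and
every Euler factor of the series is nonnegative for real `s > 1`; then let `s → 1`.

The value at `s = 1` is read off from `-log (1 - z) = ∑ zⁿ / n` at `|z| = 1`. The sign of the
Gauss sum is found modulo the prime above `p` in `ℤ[ζ]`: there the Gauss sum and a suitable
`ζᵉ ∏ (1 - ζᵏ)`, `1 ≤ k ≤ (p - 1) / 2`, have the same square, and both expand as
`(-1) ^ m * m! * (ζ - 1) ^ m + ⋯` modulo `p`, with `m = (p - 1) / 2`, so they are not opposite. -/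

section LeadingTerm

open Polynomial

variable {R : Type*} [CommRing R]

/-- `HasLeadingTermAtOne f n c` says that `f = c (X - 1) ^ n + O((X - 1) ^ (n + 1))`; the
coefficient `c` is allowed to vanish. -/
def HasLeadingTermAtOne (f : R[X]) (n : ℕ) (c : R) : Prop :=
  ∃ q : R[X], f = (X - 1) ^ n * q ∧ q.eval 1 = c

namespace HasLeadingTermAtOne

variable {f g : R[X]} {n k : ℕ} {c d : R}

lemma add (hf : HasLeadingTermAtOne f n c) (hg : HasLeadingTermAtOne g n d) :
    HasLeadingTermAtOne (f + g) n (c + d) := by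
  obtain ⟨q, rfl, rfl⟩ := hf
  obtain ⟨r, rfl, rfl⟩ := hg
  exact ⟨q + r, by ring, eval_add⟩

lemma mul (hf : HasLeadingTermAtOne f n c) (hg : HasLeadingTermAtOne g k d) :
    HasLeadingTermAtOne (f * g) (n + k) (c * d) := by
  obtain ⟨q, rfl, rfl⟩ := hf
  obtain ⟨r, rfl, rfl⟩ := hg
  exact ⟨q * r, by ring, eval_mul⟩

lemma X_pow (e : ℕ) : HasLeadingTermAtOne (X ^ e : R[X]) 0 1 :=
  ⟨X ^ e, by simp, by simp⟩

lemma one_sub_X_pow (e : ℕ) : HasLeadingTermAtOne (1 - X ^ e : R[X]) 1 (-e) := by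
  refine ⟨-∑ i ∈ Finset.range e, X ^ i, ?_, by simp [eval_finsetSum]⟩
  linear_combination mul_geom_sum (X : R[X]) e

lemma prod_one_sub_X_pow (m : ℕ) :
    HasLeadingTermAtOne (∏ k ∈ Finset.range m, (1 - X ^ (k + 1)) : R[X]) m
      ((-1) ^ m * m.factorial) := by
  induction m with
  | zero => simpa using X_pow (R := R) 0
  | succ m ih =>
    rw [Finset.prod_range_succ]
    convert ih.mul (one_sub_X_pow (m + 1)) using 1
    push_cast [Nat.factorial_succ]
    ring

lemma X_mul_derivative (hf : HasLeadingTermAtOne f (n + 1) c) :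
    HasLeadingTermAtOne (X * derivative f) n ((n + 1) * c) := by
  obtain ⟨q, rfl, rfl⟩ := hf
  refine ⟨X * (((n : R[X]) + 1) * q + (X - 1) * derivative q), ?_, by simp⟩
  simp only [derivative_mul, derivative_pow_succ, derivative_sub, derivative_X, derivative_one,
    map_add, map_natCast, map_one]
  ring

lemma eq_zero_of_dvd (hf : HasLeadingTermAtOne f n c) (hdvd : (X - 1) ^ (n + 1) ∣ f) : c = 0 := by
  obtain ⟨q, rfl, rfl⟩ := hf
  obtain ⟨r, hr⟩ := hdvd
  have hmonic : ((X - 1 : R[X]) ^ n).Monic := (monic_X_sub_C (1 : R)).pow n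
  have hq : q = (X - 1) * r := hmonic.isRegular.left (by simpa [pow_succ, mul_assoc] using hr)
  simp [hq]

end HasLeadingTermAtOne

variable (p : ℕ) [Fact p.Prime]

lemma cyclotomic_prime_zmod : cyclotomic p (ZMod p) = (X - 1) ^ (p - 1) := by
  simpa using cyclotomic_mul_prime_pow_eq (ZMod p) (p := p) (m := 1)
    (Nat.Prime.not_dvd_one Fact.out) one_pos

lemma sub_one_pow_dvd_map_of_aeval_eq_zero {K : Type*} [Field K] [CharZero K] {ζ : K}
    (hζ : IsPrimitiveRoot ζ p) {F : ℤ[X]} (hF : aeval ζ F = 0) :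
    (X - 1) ^ (p - 1) ∣ F.map (Int.castRingHom (ZMod p)) := by
  have hpos : 0 < p := (Fact.out : p.Prime).pos
  have hdvd : cyclotomic p ℤ ∣ F := by
    rw [cyclotomic_eq_minpoly hζ hpos]
    exact minpoly.isIntegrallyClosed_dvd (hζ.isIntegral hpos) hF
  rw [← cyclotomic_prime_zmod, ← map_cyclotomic p (Int.castRingHom (ZMod p))]
  exact Polynomial.map_dvd _ hdvd

-- Applying `X * d/dX` to the geometric sum `(X - 1) ^ (p - 1)` raises the exponent of `j`.
lemma hasLeadingTermAtOne_sum_pow_mul_X_pow {k : ℕ} (hk : k ≤ p - 1) :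
    HasLeadingTermAtOne (∑ j ∈ Finset.range p, C ((j : ZMod p) ^ k) * X ^ j) (p - 1 - k)
      ((-1) ^ k * (k.factorial : ZMod p)) := by
  induction k with
  | zero =>
    refine ⟨1, ?_, by simp⟩
    simp [← cyclotomic_prime_zmod, cyclotomic_prime]
  | succ k ih =>
    obtain ⟨r, hr⟩ : ∃ r, p = r + 1 + k + 1 := ⟨p - 1 - k - 1, by omega⟩
    have hr_cast : (r + 1 : ZMod p) = -(k + 1) := by
      have hp_cast : ((r + 1 + k + 1 : ℕ) : ZMod p) = 0 := by rw [← hr, ZMod.natCast_self]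
      push_cast at hp_cast
      linear_combination hp_cast
    have hstep := ih (by omega)
    rw [show p - 1 - k = r + 1 by omega] at hstep
    convert hstep.X_mul_derivative using 1
    · simp only [derivative_sum, derivative_C_mul, Finset.mul_sum]
      refine Finset.sum_congr rfl fun j _ => ?_
      cases j with
      | zero => simp
      | succ j =>
        simp only [derivative_X_pow_succ, map_pow, map_add, map_natCast, map_one, Nat.cast_succ]
        ring
    · omega
    · rw [hr_cast]
      push_cast [Nat.factorial_succ]
      ring

lemma hasLeadingTermAtOne_sum_add_prod {m : ℕ} (hm : p = 2 * m + 1) (e : ℕ) :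
    HasLeadingTermAtOne (∑ j ∈ Finset.range p, C ((j : ZMod p) ^ m) * X ^ j
        + X ^ e * ∏ k ∈ Finset.range m, (1 - X ^ (k + 1))) m
      (2 * ((-1) ^ m * (m.factorial : ZMod p))) := by
  have hsum := hasLeadingTermAtOne_sum_pow_mul_X_pow p (k := m) (by omega)
  have hprod := (HasLeadingTermAtOne.X_pow (R := ZMod p) e).mul (.prod_one_sub_X_pow m)
  rw [show p - 1 - m = m by omega] at hsum
  rw [zero_add, one_mul] at hprod
  simpa only [two_mul] using hsum.add hprod

theorem sum_legendreSym_mul_pow_add_ne_zero (hp : p ≠ 2) {K : Type*} [Field K] [CharZero K]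
    {ζ : K} (hζ : IsPrimitiveRoot ζ p) (e : ℕ) :
    ∑ j ∈ Finset.range p, (legendreSym p j : K) * ζ ^ j
      + ζ ^ e * ∏ k ∈ Finset.range (p / 2), (1 - ζ ^ (k + 1)) ≠ 0 := by
  intro hzero
  have hprime : p.Prime := Fact.out
  obtain ⟨m, hm⟩ : ∃ m, p = 2 * m + 1 := hprime.odd_of_ne_two hp
  have hm_half : p / 2 = m := by omega
  let F : ℤ[X] := ∑ j ∈ Finset.range p, C (legendreSym p j) * X ^ j
    + X ^ e * ∏ k ∈ Finset.range m, (1 - X ^ (k + 1))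
  have hF_aeval : aeval ζ F = 0 := by
    simpa [F, map_sum, map_prod, hm_half] using hzero
  have hF_map : F.map (Int.castRingHom (ZMod p)) =
      ∑ j ∈ Finset.range p, C ((j : ZMod p) ^ m) * X ^ j
        + X ^ e * ∏ k ∈ Finset.range m, (1 - X ^ (k + 1)) := by
    have hleg (j : ℕ) : (legendreSym p j : ZMod p) = (j : ZMod p) ^ m := by
      simpa [hm_half] using legendreSym.eq_pow p j
    simp only [F, Polynomial.map_add, Polynomial.map_sum, Polynomial.map_mul, Polynomial.map_pow,
      map_X, map_C, Polynomial.map_prod, Polynomial.map_sub, Polynomial.map_one,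
      Int.coe_castRingHom, hleg]
  have hdvd := sub_one_pow_dvd_map_of_aeval_eq_zero p hζ hF_aeval
  rw [hF_map] at hdvd
  have hle : m + 1 ≤ p - 1 := by have := hprime.two_le; omega
  have hcoeff :=
    (hasLeadingTermAtOne_sum_add_prod p hm e).eq_zero_of_dvd ((pow_dvd_pow _ hle).trans hdvd)
  have htwo : (2 : ZMod p) ≠ 0 := Ring.two_ne_zero (by rwa [ZMod.ringChar_zmod_n])
  have hfact : (m.factorial : ZMod p) ≠ 0 := by
    rw [Ne, ZMod.natCast_eq_zero_iff, hprime.dvd_factorial]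
    omega
  simp [htwo, hfact] at hcoeff

end LeadingTerm

section GaussSum

open Complex
open scoped Real

lemma one_sub_exp_two_pi_mul_I (x : ℝ) :
    1 - exp (2 * π * x * I) = (2 * Real.sin (π * x) : ℝ) * exp (π * (x - 1 / 2) * I) := by
  have hphase : exp (π * (x - 1 / 2) * I) = -I * exp (π * x * I) := by
    rw [show (π * (x - 1 / 2) * I : ℂ) = -(π / 2 * I) + π * x * I by ring, exp_add, exp_neg,
      exp_pi_div_two_mul_I, inv_I]
  have hsq : exp (2 * π * x * I) = exp (π * x * I) * exp (π * x * I) := by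
    rw [← exp_add]; ring_nf
  have hinv : exp (π * x * I) * exp (-(π * x) * I) = 1 := by
    rw [← exp_add]; simp
  push_cast
  rw [hphase, hsq, two_sin]
  linear_combination -hinv + (exp (-(π * x) * I) - exp (π * x * I)) * exp (π * x * I) * I_sq

lemma two_mul_sin_pos {k n : ℕ} (hk : k < n) :
    0 < 2 * Real.sin (π * ((k + 1) / (n + 1))) := by
  refine mul_pos two_pos (Real.sin_pos_of_pos_of_lt_pi (by positivity) ?_)
  refine mul_lt_of_lt_one_right Real.pi_pos ((div_lt_one (by positivity)).2 ?_)
  exact_mod_cast Nat.succ_lt_succ hk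

lemma prod_two_mul_sin (n : ℕ) :
    ∏ k ∈ Finset.range n, 2 * Real.sin (π * ((k + 1) / (n + 1))) = n + 1 := by
  have hroot := congrArg norm (isPrimitiveRoot_exp (n + 1) n.succ_ne_zero).prod_one_sub_pow_eq_order
  have hnorm : ‖(n + 1 : ℂ)‖ = n + 1 := by
    simpa using Complex.norm_natCast (n + 1)
  rw [norm_prod, hnorm] at hroot
  refine (Finset.prod_congr rfl fun k hk => ?_).trans hroot
  have hpow : exp (2 * π * I / (n + 1 : ℕ)) ^ (k + 1) =
      exp (2 * π * ((k + 1) / (n + 1) : ℝ) * I) := by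
    rw [← exp_nat_mul]
    push_cast
    ring_nf
  have hphase := norm_exp_ofReal_mul_I (π * ((k + 1) / (n + 1) - 1 / 2))
  push_cast at hphase
  rw [hpow, one_sub_exp_two_pi_mul_I, norm_mul, norm_real,
    Real.norm_of_nonneg (two_mul_sin_pos (Finset.mem_range.1 hk)).le]
  push_cast
  rw [hphase, mul_one]

lemma prod_two_mul_sin_half (m : ℕ) :
    ∏ k ∈ Finset.range m, 2 * Real.sin (π * ((k + 1) / (2 * m + 1))) = √(2 * m + 1) := by
  have hfull := prod_two_mul_sin (2 * m)
  have hreflect : ∏ k ∈ Finset.range m, (2 * Real.sin (π * (((m + k : ℕ) + 1) / (2 * m + 1)))) =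
      ∏ k ∈ Finset.range m, 2 * Real.sin (π * ((k + 1) / (2 * m + 1))) := by
    rw [← Finset.prod_range_reflect]
    refine Finset.prod_congr rfl fun k hk => ?_
    have hk' : k + 1 ≤ m := Finset.mem_range.1 hk
    rw [Nat.sub_sub, add_comm 1, ← Real.sin_pi_sub]
    congr 2
    push_cast [Nat.cast_sub hk']
    field_simp
    ring
  have hnonneg : 0 ≤ ∏ k ∈ Finset.range m, 2 * Real.sin (π * ((k + 1) / (2 * m + 1))) :=
    Finset.prod_nonneg fun k hk => by
      have hk' := Finset.mem_range.1 hk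
      exact_mod_cast (two_mul_sin_pos (by omega : k < 2 * m)).le
  rw [Nat.cast_mul, Nat.cast_ofNat, two_mul m, Finset.prod_range_add, hreflect, ← sq] at hfull
  exact (Real.sqrt_sq hnonneg).symm.trans (congrArg Real.sqrt hfull)

lemma pow_mul_one_sub_exp_pow (m k : ℕ) :
    exp (2 * π * I / (2 * m + 1 : ℕ)) ^ (m * (k + 1)) *
        (1 - exp (2 * π * I / (2 * m + 1 : ℕ)) ^ (k + 1)) =
      I ^ (2 * k + 1) * (2 * Real.sin (π * ((k + 1) / (2 * m + 1))) : ℝ) := by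
  have hne : (2 * m + 1 : ℂ) ≠ 0 := mod_cast (2 * m).succ_ne_zero
  obtain ⟨x, hx⟩ : ∃ x : ℝ, x = (k + 1) / (2 * m + 1) := ⟨_, rfl⟩
  have hx_mul : (2 * m + 1) * (x : ℂ) = k + 1 := by
    rw [hx]; push_cast; field_simp
  have hpow (n : ℕ) : exp (2 * π * I / (2 * m + 1 : ℕ)) ^ (n * (k + 1)) =
      exp (2 * π * (n * x) * I) := by
    rw [← exp_nat_mul, hx]
    push_cast
    ring_nf
  have hI : I ^ (2 * k + 1) = exp ((2 * k + 1 : ℕ) * (π / 2 * I)) := by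
    rw [exp_nat_mul, exp_pi_div_two_mul_I]
  have hpow_one := hpow 1
  rw [one_mul, Nat.cast_one, one_mul] at hpow_one
  rw [hpow, hpow_one, one_sub_exp_two_pi_mul_I, mul_left_comm, ← exp_add, mul_comm, hI, ← hx]
  push_cast
  congr 2
  linear_combination π * I * hx_mul

lemma exp_pow_mul_prod_one_sub_exp_pow (m : ℕ) :
    exp (2 * π * I / (2 * m + 1 : ℕ)) ^ (m * ∑ k ∈ Finset.range m, (k + 1)) *
        ∏ k ∈ Finset.range m, (1 - exp (2 * π * I / (2 * m + 1 : ℕ)) ^ (k + 1)) =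
      I ^ m ^ 2 * √(2 * m + 1) := by
  have hodd : ∑ k ∈ Finset.range m, (2 * k + 1) = m ^ 2 := by
    induction m with
    | zero => rfl
    | succ m ih => rw [Finset.sum_range_succ, ih]; ring
  rw [Finset.mul_sum, ← Finset.prod_pow_eq_pow_sum, ← Finset.prod_mul_distrib, ← hodd,
    ← Finset.prod_pow_eq_pow_sum, ← prod_two_mul_sin_half, ofReal_prod, ← Finset.prod_mul_distrib]
  exact Finset.prod_congr rfl fun k _ => pow_mul_one_sub_exp_pow m k

variable (p : ℕ) [Fact p.Prime]

/-- The Legendre symbol modulo `p` as a complex-valued multiplicative character of `ZMod p`. -/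
noncomputable def legendreChar : MulChar (ZMod p) ℂ :=
  (quadraticChar (ZMod p)).ringHomComp (Int.castRingHom ℂ)

lemma legendreChar_intCast (a : ℤ) : legendreChar p a = legendreSym p a := rfl

lemma legendreChar_natCast (n : ℕ) : legendreChar p n = legendreSym p n :=
  mod_cast legendreChar_intCast p n

lemma sum_zmod_eq_sum_range {M : Type*} [AddCommMonoid M] (n : ℕ) [NeZero n] (f : ZMod n → M) :
    ∑ a, f a = ∑ j ∈ Finset.range n, f j := by
  refine Finset.sum_nbij' ZMod.val (fun j : ℕ => (j : ZMod n)) ?_ ?_ ?_ ?_ ?_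
  · simp [ZMod.val_lt]
  · simp
  · simp
  · intro j hj
    exact ZMod.val_cast_of_lt (Finset.mem_range.1 hj)
  · simp

lemma legendreChar_ne_one (hp : p ≠ 2) : legendreChar p ≠ 1 :=
  (MulChar.ringHomComp_ne_one_iff (RingHom.injective_int _)).2
    (quadraticChar_ne_one (by rwa [ZMod.ringChar_zmod_n]))

lemma isQuadratic_legendreChar : (legendreChar p).IsQuadratic :=
  (quadraticChar_isQuadratic _).comp _

lemma gaussSum_legendreChar_sq (hp : p ≠ 2) :
    gaussSum (legendreChar p) ZMod.stdAddChar ^ 2 = (-1) ^ (p / 2) * p := by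
  have hneg_one : legendreChar p (-1) = (-1) ^ (p / 2) := by
    have hodd : p % 2 = 1 := Nat.odd_iff.1 ((Fact.out : p.Prime).odd_of_ne_two hp)
    have hcast := legendreChar_intCast p (-1)
    rw [legendreSym.at_neg_one hp, ZMod.χ₄_eq_neg_one_pow hodd] at hcast
    push_cast at hcast
    exact hcast
  rw [gaussSum_sq (legendreChar_ne_one p hp) (isQuadratic_legendreChar p)
    (ZMod.isPrimitive_stdAddChar p), ZMod.card, hneg_one]

lemma gaussSum_legendreChar_mulShift_natCast (n : ℕ) :
    gaussSum (legendreChar p) (ZMod.stdAddChar.mulShift (n : ZMod p)) =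
      ∑ j ∈ Finset.range p, legendreSym p j * exp (2 * π * I * (n * j / p)) := by
  rw [gaussSum, sum_zmod_eq_sum_range]
  refine Finset.sum_congr rfl fun j _ => ?_
  have hexp := ZMod.stdAddChar_coe (N := p) (n * j)
  push_cast at hexp
  rw [legendreChar_natCast, AddChar.mulShift_apply, hexp, mul_div_assoc]

theorem gaussSum_legendreChar (hp : p ≠ 2) :
    gaussSum (legendreChar p) ZMod.stdAddChar = I ^ (p / 2) ^ 2 * √p := by
  obtain ⟨m, rfl⟩ : ∃ m, p = 2 * m + 1 := (Fact.out : p.Prime).odd_of_ne_two hp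
  have hm : (2 * m + 1) / 2 = m := by omega
  have hne := sum_legendreSym_mul_pow_add_ne_zero (2 * m + 1) hp
    (isPrimitiveRoot_exp (2 * m + 1) (NeZero.ne _)) (m * ∑ k ∈ Finset.range m, (k + 1))
  have hsq := gaussSum_legendreChar_sq (2 * m + 1) hp
  have hgauss : gaussSum (legendreChar (2 * m + 1)) ZMod.stdAddChar =
      ∑ j ∈ Finset.range (2 * m + 1),
        (legendreSym (2 * m + 1) j : ℂ) * exp (2 * π * I / (2 * m + 1 : ℕ)) ^ j := by
    have hshift := gaussSum_legendreChar_mulShift_natCast (2 * m + 1) 1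
    rw [Nat.cast_one, AddChar.mulShift_one] at hshift
    rw [hshift]
    refine Finset.sum_congr rfl fun j _ => ?_
    rw [← exp_nat_mul]
    ring_nf
  rw [hm] at hne hsq ⊢
  rw [← hgauss, exp_pow_mul_prod_one_sub_exp_pow] at hne
  have hroot_sq : (I ^ m ^ 2 * √(2 * m + 1)) ^ 2 = (-1) ^ m * (2 * m + 1 : ℕ) := by
    have hparity : (-1 : ℂ) ^ m ^ 2 = (-1) ^ m :=
      neg_one_pow_congr (Nat.even_pow' two_ne_zero)
    rw [mul_pow, ← pow_mul, mul_comm _ 2, pow_mul, I_sq, hparity, ← ofReal_pow,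
      Real.sq_sqrt (by positivity)]
    push_cast
    rfl
  rw [← hroot_sq, sq_eq_sq_iff_eq_or_eq_neg] at hsq
  push_cast
  exact hsq.resolve_right fun h => hne (by rw [h, neg_add_cancel])

theorem sum_legendreSym_mul_exp (hp : p ≠ 2) (n : ℕ) :
    ∑ j ∈ Finset.range p, legendreSym p j * exp (2 * π * I * (n * j / p)) =
      legendreSym p n * (I ^ (p / 2) ^ 2 * √p) := by
  rw [← gaussSum_legendreChar_mulShift_natCast, ← gaussSum_legendreChar p hp,
    ← legendreChar_natCast]
  by_cases hn : (n : ZMod p) = 0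
  · rw [hn, AddChar.mulShift_zero, gaussSum_one_right (legendreChar_ne_one p hp),
      MulChar.map_zero, zero_mul]
  · simpa [(isQuadratic_legendreChar p).inv] using
      gaussSum_mulShift_eq (legendreChar p) ZMod.stdAddChar (Units.mk0 _ hn)

end GaussSum

section ExpZeta

open Complex HurwitzZeta MeasureTheory Filter Topology Asymptotics Set
open scoped Real

/-- The kernel `z e⁻ᵗ / (1 - z e⁻ᵗ)`, whose Mellin transform at `s` is `Γ(s) ∑ zⁿ / nˢ`. -/
noncomputable def polylogKernel (z : ℂ) (t : ℝ) : ℂ :=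
  z * Real.exp (-t) / (1 - z * Real.exp (-t))

lemma one_sub_mem_slitPlane {w : ℂ} (hnorm : ‖w‖ ≤ 1) (hw : w ≠ 1) : 1 - w ∈ slitPlane := by
  have hre_le : w.re ≤ 1 := (re_le_norm w).trans hnorm
  refine Or.inl ((sub_nonneg.2 hre_le).lt_of_ne fun hre => hw ?_)
  have hre_eq : w.re = 1 := (sub_eq_zero.1 hre.symm).symm
  have him : w.im = 0 := abs_re_eq_norm.1
    ((abs_re_le_norm w).antisymm (by rw [hre_eq, abs_one]; exact hnorm))
  exact Complex.ext hre_eq him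

variable {z : ℂ}

lemma norm_mul_exp_neg_lt_one (hz : ‖z‖ ≤ 1) {t : ℝ} (ht : 0 < t) : ‖z * Real.exp (-t)‖ < 1 := by
  rw [norm_mul, norm_real, Real.norm_of_nonneg (Real.exp_pos _).le]
  exact mul_lt_one_of_nonneg_of_lt_one_right hz (Real.exp_pos _).le
    (Real.exp_lt_one_iff.2 (neg_lt_zero.2 ht))

lemma one_sub_mul_exp_neg_mem_slitPlane (hz : ‖z‖ ≤ 1) (hz_one : z ≠ 1) {t : ℝ} (ht : 0 ≤ t) :
    1 - z * Real.exp (-t) ∈ slitPlane := by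
  rcases ht.eq_or_lt with rfl | ht
  · simpa using one_sub_mem_slitPlane hz hz_one
  · have hlt := norm_mul_exp_neg_lt_one hz ht
    exact one_sub_mem_slitPlane hlt.le fun h => by rw [h, norm_one] at hlt; exact hlt.false

lemma hasDerivAt_log_one_sub_mul_exp_neg (hz : ‖z‖ ≤ 1) (hz_one : z ≠ 1) {t : ℝ} (ht : 0 ≤ t) :
    HasDerivAt (fun t : ℝ => log (1 - z * Real.exp (-t))) (polylogKernel z t) t := by
  have hexp : HasDerivAt (fun t : ℝ => 1 - z * Real.exp (-t)) (z * Real.exp (-t)) t := by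
    have h := (((hasDerivAt_neg t).exp.ofReal_comp).const_mul z).const_sub 1
    simpa using h
  exact hexp.clog_real (one_sub_mul_exp_neg_mem_slitPlane hz hz_one ht)

lemma continuousOn_polylogKernel (hz : ‖z‖ ≤ 1) (hz_one : z ≠ 1) :
    ContinuousOn (polylogKernel z) (Ici 0) := by
  refine ContinuousOn.div (by fun_prop) (by fun_prop) fun t ht => ?_
  exact slitPlane_ne_zero (one_sub_mul_exp_neg_mem_slitPlane hz hz_one ht)

lemma tendsto_one_sub_mul_exp_neg (z : ℂ) :
    Tendsto (fun t : ℝ => 1 - z * Real.exp (-t)) atTop (𝓝 1) := by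
  have hexp : Tendsto (fun t : ℝ => (Real.exp (-t) : ℂ)) atTop (𝓝 0) :=
    (continuous_ofReal.tendsto 0).comp (Real.tendsto_exp_comp_nhds_zero.2 tendsto_neg_atTop_atBot)
  simpa using (hexp.const_mul z).const_sub 1

lemma polylogKernel_isBigO_atTop (z : ℂ) :
    polylogKernel z =O[atTop] fun t => Real.exp (-1 * t) := by
  have hinv := ((tendsto_one_sub_mul_exp_neg z).inv₀ one_ne_zero).isBigO_one ℝ
  have hexp : (fun t : ℝ => z * (Real.exp (-t) : ℂ)) =O[atTop] fun t => Real.exp (-1 * t) := by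
    refine (isBigO_of_le _ fun t => ?_).const_mul_left z
    rw [norm_real, neg_one_mul]
  exact (hexp.mul hinv).congr (fun _ => (div_eq_mul_inv _ _).symm) fun _ => mul_one _

lemma polylogKernel_isBigO_nhdsGT_zero (hz : ‖z‖ ≤ 1) (hz_one : z ≠ 1) :
    polylogKernel z =O[𝓝[>] 0] (fun t : ℝ => t ^ (-0 : ℝ)) := by
  have h := (continuousOn_polylogKernel hz hz_one 0 self_mem_Ici).mono Ioi_subset_Ici_self
  simpa using h.isBigO_one ℝ

lemma locallyIntegrableOn_polylogKernel (hz : ‖z‖ ≤ 1) (hz_one : z ≠ 1) :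
    LocallyIntegrableOn (polylogKernel z) (Ioi 0) :=
  ((continuousOn_polylogKernel hz hz_one).mono Ioi_subset_Ici_self).locallyIntegrableOn
    measurableSet_Ioi

lemma mellin_polylogKernel_one (hz : ‖z‖ ≤ 1) (hz_one : z ≠ 1) :
    mellin (polylogKernel z) 1 = -log (1 - z) := by
  have hconv : MellinConvergent (polylogKernel z) 1 :=
    mellinConvergent_of_isBigO_rpow_exp one_pos (locallyIntegrableOn_polylogKernel hz hz_one)
      (polylogKernel_isBigO_atTop z) (polylogKernel_isBigO_nhdsGT_zero hz hz_one) (by simp)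
  have hint : IntegrableOn (polylogKernel z) (Ioi 0) := by
    simpa [MellinConvergent] using hconv
  have hlim : Tendsto (fun t : ℝ => log (1 - z * Real.exp (-t))) atTop (𝓝 0) := by
    simpa using (tendsto_one_sub_mul_exp_neg z).clog one_mem_slitPlane
  have hFTC := integral_Ioi_of_hasDerivAt_of_tendsto'
    (fun t ht => hasDerivAt_log_one_sub_mul_exp_neg hz hz_one ht) hint hlim
  simpa [mellin] using hFTC

lemma hasSum_polylogKernel (hz : ‖z‖ ≤ 1) {t : ℝ} (ht : 0 < t) :
    HasSum (fun n : ℕ => z ^ (n + 1) * Real.exp (-(n + 1) * t)) (polylogKernel z t) := by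
  have hgeom := (hasSum_geometric_of_norm_lt_one (norm_mul_exp_neg_lt_one hz ht)).mul_left
    (z * Real.exp (-t))
  rw [polylogKernel, div_eq_mul_inv]
  refine hgeom.congr_fun fun n => ?_
  rw [← pow_succ', mul_pow, ← ofReal_pow, ← Real.exp_nat_mul]
  push_cast
  ring_nf

lemma hasSum_mellin_polylogKernel {s : ℂ} (hz : ‖z‖ ≤ 1) (hs : 1 < s.re) :
    HasSum (fun n : ℕ => Gamma s * z ^ (n + 1) / (n + 1 : ℕ) ^ s) (mellin (polylogKernel z) s) := by
  have h := hasSum_mellin (a := fun n : ℕ => z ^ (n + 1)) (p := fun n => (n + 1 : ℝ))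
    (F := polylogKernel z) (s := s) (fun n => Or.inr n.cast_add_one_pos) (by linarith)
    (fun t ht => hasSum_polylogKernel hz ht) ?_
  · simpa using h
  · have hzeta := (summable_nat_add_iff 1).2 (Real.summable_one_div_nat_rpow.2 hs)
    refine hzeta.of_nonneg_of_le (fun n => by positivity) fun n => ?_
    push_cast
    gcongr
    simpa using pow_le_one₀ (norm_nonneg z) hz

lemma norm_exp_two_pi_mul_I (x : ℝ) : ‖exp (2 * π * x * I)‖ = 1 :=
  mod_cast norm_exp_ofReal_mul_I (2 * π * x)

variable {x : ℝ}

lemma exp_two_pi_mul_I_ne_one (hx : (x : UnitAddCircle) ≠ 0) : exp (2 * π * x * I) ≠ 1 := by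
  intro hexp
  obtain ⟨n, hn⟩ := exp_eq_one_iff.1 hexp
  have hxn : (x : ℂ) = n := mul_right_cancel₀ two_pi_I_ne_zero (by linear_combination hn)
  exact hx ((AddCircle.coe_eq_zero_iff 1).2 ⟨n, by simpa using (mod_cast hxn.symm : (n : ℝ) = x)⟩)

lemma mellin_polylogKernel_exp (x : ℝ) {s : ℂ} (hs : 1 < s.re) :
    mellin (polylogKernel (exp (2 * π * x * I))) s = Gamma s * expZeta x s := by
  have hexp := (hasSum_nat_add_iff' 1).2
    ((hasSum_expZeta_of_one_lt_re x hs).mul_left (Gamma s))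
  have hzero : (0 : ℂ) ^ s = 0 := zero_cpow (ne_zero_of_one_lt_re hs)
  rw [Finset.sum_range_one, Nat.cast_zero, hzero, div_zero, mul_zero, sub_zero] at hexp
  refine (hasSum_mellin_polylogKernel (norm_exp_two_pi_mul_I x).le hs).unique
    (hexp.congr_fun fun n => ?_)
  rw [← exp_nat_mul, mul_div_assoc]
  ring_nf

theorem expZeta_coe_one (hx : (x : UnitAddCircle) ≠ 0) :
    expZeta x 1 = -log (1 - exp (2 * π * x * I)) := by
  have hz := (norm_exp_two_pi_mul_I x).le
  have hz_one := exp_two_pi_mul_I_ne_one hx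
  have hofReal : Tendsto (fun s : ℝ => (s : ℂ)) (𝓝[>] 1) (𝓝 1) :=
    (continuous_ofReal.tendsto' 1 1 ofReal_one).mono_left nhdsWithin_le_nhds
  have hmellin : ContinuousAt (mellin (polylogKernel (exp (2 * π * x * I)))) 1 :=
    (mellin_differentiableAt_of_isBigO_rpow_exp one_pos
      (locallyIntegrableOn_polylogKernel hz hz_one) (polylogKernel_isBigO_atTop _)
      (polylogKernel_isBigO_nhdsGT_zero hz hz_one) (by simp)).continuousAt
  have hzeta : ContinuousAt (fun s => Gamma s * expZeta x s) 1 :=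
    continuousAt_Gamma_one.mul (differentiable_expZeta_of_ne_zero hx 1).continuousAt
  have heq := tendsto_nhds_unique_of_eventuallyEq (hmellin.tendsto.comp hofReal)
    (hzeta.tendsto.comp hofReal)
    (eventually_nhdsWithin_of_forall fun s hs => mellin_polylogKernel_exp x hs)
  rw [← mellin_polylogKernel_one hz hz_one, heq, Gamma_one, one_mul]

lemma exp_two_pi_mul_fract_mul_I (x : ℝ) :
    exp (2 * π * Int.fract x * I) = exp (2 * π * x * I) := by
  rw [← Int.self_sub_floor, ← exp_periodic.sub_int_mul_eq (x := 2 * π * x * I) ⌊x⌋]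
  push_cast
  ring_nf

lemma fract_pos_of_coe_ne_zero (hx : (x : UnitAddCircle) ≠ 0) : 0 < Int.fract x :=
  Int.fract_pos.2 fun h => hx ((AddCircle.coe_eq_zero_iff 1).2 ⟨⌊x⌋, by simpa using h.symm⟩)

lemma log_one_sub_exp_im (hx : (x : UnitAddCircle) ≠ 0) :
    (log (1 - exp (2 * π * x * I))).im = π * (Int.fract x - 1 / 2) := by
  have hpos := fract_pos_of_coe_ne_zero hx
  have hlt := Int.fract_lt_one x
  have hsin : 0 < Real.sin (π * Int.fract x) :=
    Real.sin_pos_of_pos_of_lt_pi (mul_pos Real.pi_pos hpos) (mul_lt_of_lt_one_right Real.pi_pos hlt)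
  have harg := arg_mul_cos_add_sin_mul_I (mul_pos two_pos hsin)
    (θ := π * (Int.fract x - 1 / 2)) ⟨by nlinarith [Real.pi_pos], by nlinarith [Real.pi_pos]⟩
  rw [← exp_mul_I] at harg
  rw [← exp_two_pi_mul_fract_mul_I, one_sub_exp_two_pi_mul_I, log_im, ← harg]
  push_cast
  rfl

theorem sinZeta_coe_one (hx : (x : UnitAddCircle) ≠ 0) :
    sinZeta x 1 = (π * (1 / 2 - Int.fract x) : ℝ) := by
  have hmem := one_sub_mem_slitPlane (norm_exp_two_pi_mul_I x).le (exp_two_pi_mul_I_ne_one hx)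
  have hneg : expZeta (-x) 1 = -(starRingEnd ℂ) (log (1 - exp (2 * π * x * I))) := by
    have h := expZeta_coe_one (x := -x) (by simpa using hx)
    rw [← log_conj _ (mem_slitPlane_iff_arg.1 hmem).1, map_sub, map_one, ← exp_conj]
    simpa [Complex.conj_ofNat] using h
  rw [sinZeta_eq, expZeta_coe_one hx, hneg, neg_sub_neg, ← neg_sub, sub_conj, log_one_sub_exp_im hx]
  push_cast
  field_simp
  ring

end ExpZeta

section EulerProduct

open Filter Topology

theorem tsum_nonneg_of_eulerProduct {f : ℕ → ℝ} (hf_zero : f 0 = 0) (hf_one : f 1 = 1)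
    (hmul : ∀ {m n : ℕ}, m.Coprime n → f (m * n) = f m * f n) (hsum : Summable f)
    (hlocal : ∀ q : ℕ, q.Prime → 0 ≤ ∑' e : ℕ, f (q ^ e)) : 0 ≤ ∑' n, f n :=
  ge_of_tendsto' (EulerProduct.eulerProduct hf_one hmul hsum.norm hf_zero) fun _ =>
    Finset.prod_nonneg fun q hq => hlocal q (Nat.prime_of_mem_primesBelow hq)

lemma natCast_zmod_four_eq_unit {n : ℕ} (hn : Odd n) : ∃ u : (ZMod 4)ˣ, (n : ZMod 4) = u :=
  ⟨ZMod.unitOfCoprime n (hn.coprime_two_right.pow_right 2), rfl⟩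

/-- The function `n ↦ Im (i ^ (m ^ 2) * (1 - (-i) ^ n))` on residues modulo `4`, where
`ε = (-1) ^ m`; see `im_I_pow_sq_mul_one_sub_neg_I_pow`. For `ε = 1` it is the nontrivial character
modulo `4`. -/
def quarterWeight (ε : ℤˣ) : ZMod 4 → ℤ :=
  ![0, 1, 1 - ε, -ε]

@[simp] lemma quarterWeight_zero (ε : ℤˣ) : quarterWeight ε 0 = 0 := rfl

@[simp] lemma quarterWeight_one (ε : ℤˣ) : quarterWeight ε 1 = 1 := rfl

@[simp] lemma quarterWeight_two (ε : ℤˣ) : quarterWeight ε 2 = 1 - ε := rfl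

@[simp] lemma quarterWeight_three (ε : ℤˣ) : quarterWeight ε 3 = -ε := rfl

lemma quarterWeight_mul_unit :
    ∀ (ε : ℤˣ) (a : ZMod 4) (u : (ZMod 4)ˣ),
      quarterWeight ε (a * u) = quarterWeight ε a * quarterWeight ε u := by
  decide

lemma abs_quarterWeight_le_two : ∀ (ε : ℤˣ) (a : ZMod 4), |quarterWeight ε a| ≤ 2 := by
  decide

lemma abs_quarterWeight_unit : ∀ (ε : ℤˣ) (u : (ZMod 4)ˣ), |quarterWeight ε u| = 1 := by
  decide

lemma quarterWeight_natCast_mul (ε : ℤˣ) {m n : ℕ} (h : m.Coprime n) :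
    quarterWeight ε ((m * n : ℕ) : ZMod 4) = quarterWeight ε m * quarterWeight ε n := by
  have hodd : Odd m ∨ Odd n := by
    by_contra! heven
    simp only [Nat.not_odd_iff_even] at heven
    exact Nat.not_coprime_of_dvd_of_dvd one_lt_two heven.1.two_dvd heven.2.two_dvd h
  push_cast
  rcases hodd with hm | hn
  · obtain ⟨u, hu⟩ := natCast_zmod_four_eq_unit hm
    rw [hu, mul_comm (u : ZMod 4), quarterWeight_mul_unit, mul_comm]
  · obtain ⟨u, hu⟩ := natCast_zmod_four_eq_unit hn
    rw [hu, quarterWeight_mul_unit]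

lemma quarterWeight_natCast_pow (ε : ℤˣ) {n : ℕ} (hn : Odd n) (e : ℕ) :
    quarterWeight ε ((n ^ e : ℕ) : ZMod 4) = quarterWeight ε n ^ e := by
  obtain ⟨u, hu⟩ := natCast_zmod_four_eq_unit hn
  rw [Nat.cast_pow, hu]
  induction e with
  | zero => simp
  | succ e ih => rw [pow_succ, quarterWeight_mul_unit, ih, pow_succ]

lemma quarterWeight_two_pow (ε : ℤˣ) {e : ℕ} (he : 2 ≤ e) :
    quarterWeight ε ((2 ^ e : ℕ) : ZMod 4) = 0 := by
  rw [(ZMod.natCast_eq_zero_iff _ 4).2 (pow_dvd_pow 2 he), quarterWeight_zero]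

/-- Up to a factor `√p`, the `n`-th coefficient of the Dirichlet series `quarterSeries p`, where
`ε = (-1) ^ (p / 2)`. -/
def weightedLegendre (p : ℕ) [Fact p.Prime] (ε : ℤˣ) (n : ℕ) : ℤ :=
  legendreSym p n * quarterWeight ε n

variable (p : ℕ) [Fact p.Prime]

lemma abs_legendreSym_le_one (a : ℤ) : |legendreSym p a| ≤ 1 := by
  by_cases ha : (a : ZMod p) = 0
  · simp [(legendreSym.eq_zero_iff p a).2 ha]
  · rcases legendreSym.eq_one_or_neg_one p ha with h | h <;> simp [h]

variable (ε : ℤˣ)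

lemma abs_weightedLegendre_le_two (n : ℕ) : |weightedLegendre p ε n| ≤ 2 := by
  rw [weightedLegendre, abs_mul]
  simpa using mul_le_mul (abs_legendreSym_le_one p n) (abs_quarterWeight_le_two ε n)
    (abs_nonneg _) zero_le_one

lemma abs_weightedLegendre_le_one {n : ℕ} (hn : Odd n) : |weightedLegendre p ε n| ≤ 1 := by
  obtain ⟨u, hu⟩ := natCast_zmod_four_eq_unit hn
  rw [weightedLegendre, abs_mul, hu, abs_quarterWeight_unit, mul_one]
  exact abs_legendreSym_le_one p n

lemma weightedLegendre_zero : weightedLegendre p ε 0 = 0 := by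
  simp [weightedLegendre]

lemma weightedLegendre_one : weightedLegendre p ε 1 = 1 := by
  simp [weightedLegendre]

lemma weightedLegendre_mul {m n : ℕ} (h : m.Coprime n) :
    weightedLegendre p ε (m * n) = weightedLegendre p ε m * weightedLegendre p ε n := by
  rw [weightedLegendre, quarterWeight_natCast_mul ε h, Nat.cast_mul, legendreSym.mul,
    weightedLegendre, weightedLegendre]
  ring

lemma weightedLegendre_pow {n : ℕ} (hn : Odd n) (e : ℕ) :
    weightedLegendre p ε (n ^ e) = weightedLegendre p ε n ^ e := by
  have hpow : legendreSym p (n ^ e : ℕ) = legendreSym p n ^ e := by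
    rw [Nat.cast_pow]
    exact map_pow (legendreSym.hom p) _ e
  rw [weightedLegendre, quarterWeight_natCast_pow ε hn, hpow, weightedLegendre, mul_pow]

lemma weightedLegendre_two_pow {e : ℕ} (he : 2 ≤ e) : weightedLegendre p ε (2 ^ e) = 0 := by
  rw [weightedLegendre, quarterWeight_two_pow ε he, mul_zero]

variable {s : ℝ}

lemma summable_weightedLegendre_div_rpow (hs : 1 < s) :
    Summable fun n : ℕ => weightedLegendre p ε n / (n : ℝ) ^ s := by
  refine ((Real.summable_one_div_nat_rpow.2 hs).mul_left 2).of_norm_bounded fun n => ?_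
  rw [norm_div, Real.norm_of_nonneg (by positivity : 0 ≤ (n : ℝ) ^ s), mul_one_div]
  rw [Real.norm_eq_abs]
  gcongr
  exact mod_cast abs_weightedLegendre_le_two p ε n

lemma tsum_weightedLegendre_two_pow_nonneg (hs : 1 < s) :
    0 ≤ ∑' e : ℕ, weightedLegendre p ε (2 ^ e) / ((2 ^ e : ℕ) : ℝ) ^ s := by
  have hvanish (e : ℕ) (he : e ∉ Finset.range 2) :
      weightedLegendre p ε (2 ^ e) / ((2 ^ e : ℕ) : ℝ) ^ s = 0 := by
    rw [weightedLegendre_two_pow p ε (not_lt.1 (mt Finset.mem_range.2 he)), Int.cast_zero,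
      zero_div]
  rw [tsum_eq_sum hvanish]
  have hbound : |(weightedLegendre p ε 2 : ℝ)| ≤ 2 := mod_cast abs_weightedLegendre_le_two p ε 2
  have htwo : (2 : ℝ) ≤ 2 ^ s := by
    simpa using Real.rpow_le_rpow_of_exponent_le one_le_two hs.le
  have hfactor : -1 ≤ weightedLegendre p ε 2 / (2 : ℝ) ^ s := by
    rw [le_div_iff₀ (by positivity)]
    linarith [neg_le_of_abs_le hbound]
  simp only [Finset.sum_range_succ, Finset.sum_range_zero, pow_zero, pow_one,
    weightedLegendre_one, Nat.cast_one, Nat.cast_ofNat, Real.one_rpow, Int.cast_one]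
  linarith

lemma tsum_weightedLegendre_odd_pow_nonneg (hs : 0 < s) {q : ℕ} (hq : Odd q)
    (hq_one : 1 < q) : 0 ≤ ∑' e : ℕ, weightedLegendre p ε (q ^ e) / ((q ^ e : ℕ) : ℝ) ^ s := by
  have hgeom (e : ℕ) : weightedLegendre p ε (q ^ e) / ((q ^ e : ℕ) : ℝ) ^ s =
      (weightedLegendre p ε q / (q : ℝ) ^ s) ^ e := by
    rw [weightedLegendre_pow p ε hq, div_pow, Nat.cast_pow, ← Real.rpow_natCast_mul q.cast_nonneg,
      mul_comm, Real.rpow_mul_natCast q.cast_nonneg, Int.cast_pow]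
  have hbound : |(weightedLegendre p ε q : ℝ)| ≤ 1 := mod_cast abs_weightedLegendre_le_one p ε hq
  have hpow : 1 < (q : ℝ) ^ s := Real.one_lt_rpow (mod_cast hq_one) hs
  have hratio : |weightedLegendre p ε q / (q : ℝ) ^ s| < 1 := by
    rw [abs_div, abs_of_pos (one_pos.trans hpow), div_lt_one (one_pos.trans hpow)]
    exact hbound.trans_lt hpow
  simp_rw [hgeom]
  rw [tsum_geometric_of_abs_lt_one hratio, inv_nonneg]
  exact sub_nonneg.2 (abs_lt.1 hratio).2.le

theorem tsum_weightedLegendre_nonneg (hs : 1 < s) :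
    0 ≤ ∑' n : ℕ, weightedLegendre p ε n / (n : ℝ) ^ s := by
  refine tsum_nonneg_of_eulerProduct ?_ ?_ (fun {m n} h => ?_)
    (summable_weightedLegendre_div_rpow p ε hs) fun q hq => ?_
  · rw [weightedLegendre_zero, Int.cast_zero, zero_div]
  · rw [weightedLegendre_one, Int.cast_one, Nat.cast_one, Real.one_rpow, div_one]
  · rw [weightedLegendre_mul p ε h, Nat.cast_mul, Real.mul_rpow m.cast_nonneg n.cast_nonneg,
      Int.cast_mul, mul_div_mul_comm]
  · rcases hq.eq_two_or_odd' with rfl | hodd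
    · exact tsum_weightedLegendre_two_pow_nonneg p ε hs
    · exact tsum_weightedLegendre_odd_pow_nonneg p ε (one_pos.trans hs) hodd hq.one_lt

end EulerProduct

section QuarterSum

open Complex HurwitzZeta Filter Topology
open scoped Real

lemma fract_sub_quarter_sub_fract {x : ℝ} (hx_nonneg : 0 ≤ x) (hx_lt_one : x < 1) :
    Int.fract (x - 1 / 4) - Int.fract x = (if x < 1 / 4 then 1 else 0) - 1 / 4 := by
  rw [Int.fract_eq_self.2 ⟨hx_nonneg, hx_lt_one⟩]
  split_ifs with hx
  · have hfract : Int.fract (x - 1 / 4) = x + 3 / 4 :=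
      Int.fract_eq_iff.2 ⟨by linarith, by linarith, -1, by norm_num; ring⟩
    rw [hfract]
    ring
  · rw [Int.fract_eq_self.2 ⟨by linarith, by linarith⟩]
    ring

lemma neg_I_pow_eq_pow_mod (n : ℕ) : (-I) ^ n = (-I) ^ (n % 4) :=
  pow_eq_pow_mod n ((Even.neg_pow ⟨2, rfl⟩ I).trans I_pow_four)

lemma im_one_sub_neg_I_pow (n : ℕ) : (1 - (-I) ^ n).im = quarterWeight 1 n := by
  have hlt : n % 4 < 4 := Nat.mod_lt n four_pos
  rw [neg_I_pow_eq_pow_mod, ← ZMod.natCast_mod n 4]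
  interval_cases n % 4 <;> simp [pow_succ]

lemma im_I_mul_one_sub_neg_I_pow (n : ℕ) :
    (I * (1 - (-I) ^ n)).im = quarterWeight (-1) n := by
  have hlt : n % 4 < 4 := Nat.mod_lt n four_pos
  rw [neg_I_pow_eq_pow_mod, ← ZMod.natCast_mod n 4]
  interval_cases n % 4 <;> norm_num [pow_succ]

lemma im_I_pow_sq_mul_one_sub_neg_I_pow (m n : ℕ) :
    (I ^ m ^ 2 * (1 - (-I) ^ n)).im = quarterWeight ((-1) ^ m) n := by
  rcases m.even_or_odd' with ⟨k, rfl | rfl⟩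
  · have hpow : I ^ (2 * k) ^ 2 = 1 := by
      rw [show (2 * k) ^ 2 = 4 * k ^ 2 by ring, pow_mul, I_pow_four, one_pow]
    rw [hpow, one_mul, im_one_sub_neg_I_pow, (even_two_mul k).neg_one_pow]
  · have hpow : I ^ (2 * k + 1) ^ 2 = I := by
      rw [show (2 * k + 1) ^ 2 = 4 * (k ^ 2 + k) + 1 by ring, pow_succ, pow_mul, I_pow_four,
        one_pow, one_mul]
    rw [hpow, im_I_mul_one_sub_neg_I_pow, (odd_two_mul_add_one k).neg_one_pow]

variable (p : ℕ) [Fact p.Prime]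

lemma sum_range_legendreSym (hp : p ≠ 2) : ∑ j ∈ Finset.range p, legendreSym p j = 0 := by
  have hsum := quadraticChar_sum_zero (F := ZMod p) (by rwa [ZMod.ringChar_zmod_n])
  rw [sum_zmod_eq_sum_range] at hsum
  simpa only [legendreSym, Int.cast_natCast] using hsum

lemma sum_Icc_legendreSym_eq_sum_ite (hp : p ≠ 2) :
    ∑ n ∈ Finset.Icc 1 (p / 4), legendreSym p n =
      ∑ j ∈ Finset.range p, legendreSym p j * (if (j / p : ℝ) < 1 / 4 then 1 else 0) := by
  have hprime : p.Prime := Fact.out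
  have hodd : p % 2 = 1 := Nat.odd_iff.1 (hprime.odd_of_ne_two hp)
  have hlt (j : ℕ) : (j / p : ℝ) < 1 / 4 ↔ j ≤ p / 4 := by
    rw [div_lt_div_iff₀ (mod_cast hprime.pos) four_pos]
    norm_cast
    omega
  simp only [hlt, mul_ite, mul_one, mul_zero, ← Finset.sum_filter]
  refine Finset.sum_subset (fun j hj => ?_) fun j hj hj_not_mem => ?_
  · simp only [Finset.mem_Icc, Finset.mem_filter, Finset.mem_range] at hj ⊢
    omega
  · simp only [Finset.mem_Icc, Finset.mem_filter] at hj hj_not_mem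
    obtain rfl : j = 0 := by omega
    simp

lemma sum_legendreSym_mul_fract (hp : p ≠ 2) :
    ∑ j ∈ Finset.range p,
        (legendreSym p j : ℝ) * (Int.fract (j / p - 1 / 4 : ℝ) - Int.fract (j / p : ℝ)) =
      ∑ n ∈ Finset.Icc 1 (p / 4), legendreSym p n := by
  have hpos : (0 : ℝ) < p := mod_cast (Fact.out : p.Prime).pos
  have hzero : ∑ j ∈ Finset.range p, (legendreSym p j : ℝ) = 0 :=
    mod_cast sum_range_legendreSym p hp
  have hterm (j : ℕ) (hj : j ∈ Finset.range p) :=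
    fract_sub_quarter_sub_fract (x := j / p) (by positivity)
      ((div_lt_one hpos).2 (mod_cast Finset.mem_range.1 hj))
  rw [Finset.sum_congr rfl fun j hj => by rw [hterm j hj, mul_sub], Finset.sum_sub_distrib,
    ← Finset.sum_mul, hzero, zero_mul, sub_zero, sum_Icc_legendreSym_eq_sum_ite p hp]
  push_cast
  rfl

lemma sum_legendreSym_mul_sin_sub_sin (hp : p ≠ 2) (n : ℕ) :
    ∑ j ∈ Finset.range p, (legendreSym p j : ℝ) *
        (Real.sin (2 * π * (j / p : ℝ) * n) - Real.sin (2 * π * (j / p - 1 / 4 : ℝ) * n)) =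
      √p * weightedLegendre p ((-1) ^ (p / 2)) n := by
  have hquarter : (-I) ^ n = exp (-(π / 2 * I) * n) := by
    rw [mul_comm, exp_nat_mul, exp_neg, exp_pi_div_two_mul_I, inv_I]
  have hterm (j : ℕ) : (legendreSym p j : ℝ) *
      (Real.sin (2 * π * (j / p : ℝ) * n) - Real.sin (2 * π * (j / p - 1 / 4 : ℝ) * n)) =
      (legendreSym p j * exp (2 * π * I * (n * j / p)) * (1 - (-I) ^ n)).im := by
    rw [← exp_ofReal_mul_I_im, ← exp_ofReal_mul_I_im, ← sub_im, ← im_ofReal_mul, hquarter,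
      mul_assoc _ (exp _), mul_one_sub, ← exp_add]
    push_cast
    ring_nf
  simp_rw [hterm]
  rw [← im_sum, ← Finset.sum_mul, sum_legendreSym_mul_exp p hp, weightedLegendre,
    show (legendreSym p n * (I ^ (p / 2) ^ 2 * √p) * (1 - (-I) ^ n) : ℂ) =
      (√p * legendreSym p n : ℝ) * (I ^ (p / 2) ^ 2 * (1 - (-I) ^ n)) by push_cast; ring,
    im_ofReal_mul, im_I_pow_sq_mul_one_sub_neg_I_pow]
  push_cast
  ring

lemma coe_div_ne_zero {n j : ℕ} (hj_pos : 0 < j) (hj : j < n) :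
    ((j / n : ℝ) : UnitAddCircle) ≠ 0 := by
  intro hzero
  obtain ⟨k, hk⟩ := (AddCircle.coe_eq_zero_iff 1).1 hzero
  rw [zsmul_one, eq_div_iff (mod_cast (hj_pos.trans hj).ne')] at hk
  exact Nat.not_dvd_of_pos_of_lt hj_pos hj
    (Int.natCast_dvd_natCast.1 ⟨k, by rw [mul_comm]; exact_mod_cast hk.symm⟩)

lemma coe_div_sub_quarter_ne_zero {n : ℕ} (hn : Odd n) (j : ℕ) :
    ((j / n - 1 / 4 : ℝ) : UnitAddCircle) ≠ 0 := by
  intro hzero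
  obtain ⟨k, hk⟩ := (AddCircle.coe_eq_zero_iff 1).1 hzero
  have hn_ne : (n : ℝ) ≠ 0 := mod_cast hn.pos.ne'
  rw [zsmul_one] at hk
  have hreal : (4 : ℝ) * j = n * (4 * k + 1) := by
    field_simp at hk
    linarith
  have hint : (4 : ℤ) * j = n * (4 * k + 1) := mod_cast hreal
  have hodd : Odd ((n : ℤ) * (4 * k + 1)) :=
    ((Int.odd_coe_nat n).2 hn).mul ⟨2 * k, by ring⟩
  exact Int.not_even_iff_odd.2 hodd (hint ▸ ⟨2 * j, by ring⟩)

/-- The Dirichlet series `∑ₙ cₙ n⁻ˢ` with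
`cₙ = ∑ⱼ χ(j) (sin (2πjn/p) - sin (2π(j/p - 1/4)n))`, `χ` being the Legendre symbol modulo `p`,
continued to the whole plane as a combination of sine zeta functions. -/
noncomputable def quarterSeries (s : ℂ) : ℂ :=
  ∑ j ∈ Finset.range p,
    legendreSym p j * (sinZeta (j / p : ℝ) s - sinZeta ((j / p - 1 / 4 : ℝ)) s)

lemma continuous_quarterSeries : Continuous (quarterSeries p) := by
  have hsin (a : UnitAddCircle) : Continuous (sinZeta a) := (differentiableAt_sinZeta a).continuous
  unfold quarterSeries
  fun_prop

lemma quarterSeries_ofReal (hp : p ≠ 2) {s : ℝ} (hs : 1 < s) :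
    quarterSeries p s =
      (√p * ∑' n : ℕ, weightedLegendre p ((-1) ^ (p / 2)) n / (n : ℝ) ^ s : ℝ) := by
  have hs' : 1 < (s : ℂ).re := hs
  have hsin : HasSum _ (quarterSeries p s) := hasSum_sum fun j _ =>
    ((hasSum_nat_sinZeta (j / p : ℝ) hs').sub (hasSum_nat_sinZeta (j / p - 1 / 4 : ℝ) hs')).mul_left
      (legendreSym p j : ℂ)
  have hweight := hasSum_ofReal.2
    ((summable_weightedLegendre_div_rpow p ((-1) ^ (p / 2)) hs).hasSum.mul_left √p)
  refine hsin.unique (hweight.congr_fun fun n => ?_)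
  rw [← mul_div_assoc, ← sum_legendreSym_mul_sin_sub_sin p hp n, Finset.sum_div]
  push_cast [ofReal_cpow n.cast_nonneg]
  refine Finset.sum_congr rfl fun j _ => ?_
  rw [← sub_div, mul_div_assoc]

lemma quarterSeries_one (hp : p ≠ 2) :
    quarterSeries p 1 = (π * ∑ n ∈ Finset.Icc 1 (p / 4), legendreSym p n : ℝ) := by
  have hterm (j : ℕ) (hj : j ∈ Finset.range p) :
      (legendreSym p j : ℂ) * (sinZeta (j / p : ℝ) 1 - sinZeta (j / p - 1 / 4 : ℝ) 1) =
        (π * (legendreSym p j *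
          (Int.fract (j / p - 1 / 4 : ℝ) - Int.fract (j / p : ℝ))) : ℝ) := by
    rcases Nat.eq_zero_or_pos j with rfl | hj_pos
    · simp
    · rw [sinZeta_coe_one, sinZeta_coe_one]
      · push_cast
        ring
      · exact coe_div_sub_quarter_ne_zero ((Fact.out : p.Prime).odd_of_ne_two hp) j
      · exact coe_div_ne_zero hj_pos (Finset.mem_range.1 hj)
  rw [quarterSeries, Finset.sum_congr rfl hterm, ← ofReal_sum, ← Finset.mul_sum,
    sum_legendreSym_mul_fract p hp]

theorem quarterSeries_one_re_nonneg (hp : p ≠ 2) : 0 ≤ (quarterSeries p 1).re := by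
  have hcont : Continuous fun s : ℝ => (quarterSeries p s).re :=
    continuous_re.comp ((continuous_quarterSeries p).comp continuous_ofReal)
  have hlim : Tendsto (fun s : ℝ => (quarterSeries p s).re) (𝓝[>] 1) (𝓝 (quarterSeries p 1).re) :=
    (hcont.tendsto' 1 _ (by rw [ofReal_one])).mono_left nhdsWithin_le_nhds
  refine ge_of_tendsto hlim (eventually_nhdsWithin_of_forall fun s hs => ?_)
  rw [quarterSeries_ofReal p hp hs, ofReal_re]
  exact mul_nonneg (Real.sqrt_nonneg p) (tsum_weightedLegendre_nonneg p _ hs)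

end QuarterSum

/-- For every odd prime `p`, the sum `∑_{n=1}^{⌊p/4⌋} (n/p)` of Legendre
symbols is nonnegative. -/
theorem stmt_11 (p : ℕ) [Fact p.Prime] (hp : p ≠ 2) :
    0 ≤ ∑ n ∈ Finset.Icc 1 (p / 4), legendreSym p (n : ℤ) := by
  have hnonneg := quarterSeries_one_re_nonneg p hp
  rw [quarterSeries_one p hp, Complex.ofReal_re, mul_nonneg_iff_of_pos_left Real.pi_pos] at hnonneg
  exact_mod_cast hnonneg
end

section
/- For every prime p with p ≡ 1 (mod 8), the sum Σ_{n=1}^{⌊p/8⌋} (n/p) is nonnegative. -/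
/-!
Let `χ` be the Legendre symbol modulo `p`, an even character. Expanding `χ` through its Gauss sum
turns a short character sum into a Fourier series: for `0 ≤ x < 1` with `p x` not an integer,
`π ∑_{n < p x} χ(n)` is the limit of `G ∑_n χ(n) sin(2πnx) / n ^ s` as `s → 1⁺`, where `G` is the
quadratic Gauss sum. Gauss's evaluation through `q`-binomial coefficients gives `G > 0`. For
`x = 1/8`, the function `n ↦ sin(2πnx)` is a nonnegative combination of the real characters of
conductors `8` and `4`, the latter evaluated at `n / 2`. As `χ(2) = 1`, the series is a nonnegative
combination of Dirichlet series of real completely multiplicative functions, and these are positive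
for `s > 1` by their Euler products.
-/

section Polylogarithm

open Filter Topology Asymptotics MeasureTheory Set Complex HurwitzZeta

variable {z : ℂ}

/-- The Bose-Einstein integrand: `Γ(s) Li_s(z)` is the Mellin transform of `t ↦ z / (e ^ t - z)`. -/
noncomputable def boseIntegrand (z : ℂ) (t : ℝ) : ℂ := z / (exp t - z)

lemma exp_sub_ne_zero (hz : ‖z‖ ≤ 1) (hz1 : z ≠ 1) {t : ℝ} (ht : 0 ≤ t) : exp t - z ≠ 0 := by
  rintro h
  have hzt : z = exp t := (sub_eq_zero.1 h).symm
  have ht0 : t = 0 := by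
    rw [hzt, norm_exp_ofReal, Real.exp_le_one_iff] at hz
    exact le_antisymm hz ht
  simp [hzt, ht0] at hz1

lemma one_sub_mem_slitPlane_s12 (hz : ‖z‖ ≤ 1) (hz1 : z ≠ 1) : 1 - z ∈ slitPlane := by
  rw [mem_slitPlane_iff, sub_re, one_re, sub_im, one_im, zero_sub, neg_ne_zero]
  by_contra! h
  exact hz1 (Complex.ext (le_antisymm ((re_le_norm z).trans hz) (by simpa using h.1)) h.2)

lemma continuousOn_boseIntegrand (hz : ‖z‖ ≤ 1) (hz1 : z ≠ 1) :
    ContinuousOn (boseIntegrand z) (Ici 0) :=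
  continuousOn_const.div (by fun_prop) fun _ ht ↦ exp_sub_ne_zero hz hz1 ht

lemma isBigO_boseIntegrand_atTop (hz : ‖z‖ ≤ 1) :
    (boseIntegrand z) =O[atTop] fun t ↦ Real.exp (-1 * t) := by
  refine IsBigO.of_bound 2 ?_
  filter_upwards [eventually_ge_atTop 1] with t ht
  have hexp : 2 ≤ Real.exp t := by linarith [Real.add_one_le_exp t]
  have hden : Real.exp t / 2 ≤ ‖exp t - z‖ := by
    have := norm_sub_norm_le (exp t) z
    rw [norm_exp_ofReal] at this
    linarith
  rw [boseIntegrand, norm_div, Real.norm_eq_abs, Real.abs_exp, neg_one_mul,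
    Real.exp_neg, ← div_eq_mul_inv]
  calc ‖z‖ / ‖exp t - z‖ ≤ 1 / (Real.exp t / 2) := by gcongr
    _ = 2 / Real.exp t := by rw [one_div_div]

lemma isBigO_boseIntegrand_nhdsGT_zero (hz : ‖z‖ ≤ 1) (hz1 : z ≠ 1) :
    (boseIntegrand z) =O[𝓝[>] 0] fun t ↦ t ^ (-0 : ℝ) := by
  simp only [neg_zero, Real.rpow_zero]
  exact ((continuousOn_boseIntegrand hz hz1 0 self_mem_Ici).mono Ioi_subset_Ici_self).isBigO_one ℝ

lemma locallyIntegrableOn_boseIntegrand (hz : ‖z‖ ≤ 1) (hz1 : z ≠ 1) :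
    LocallyIntegrableOn (boseIntegrand z) (Ioi 0) :=
  ((continuousOn_boseIntegrand hz hz1).mono Ioi_subset_Ici_self).locallyIntegrableOn
    measurableSet_Ioi

lemma hasSum_mellin_boseIntegrand (hz : ‖z‖ ≤ 1) {s : ℂ} (hs : 1 < s.re) :
    HasSum (fun n : ℕ ↦ Gamma s * z ^ (n + 1) / ((n + 1 : ℝ) : ℂ) ^ s)
      (mellin (boseIntegrand z) s) := by
  refine hasSum_mellin (a := fun n : ℕ ↦ z ^ (n + 1)) (fun n ↦ Or.inr n.cast_add_one_pos)
    (zero_lt_one.trans hs) (fun t ht ↦ ?_) ?_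
  · have hlt : ‖z * exp (-t)‖ < 1 := by
      rw [norm_mul, ← ofReal_neg, norm_exp_ofReal]
      exact mul_lt_one_of_nonneg_of_lt_one_right hz (Real.exp_nonneg _)
        (Real.exp_lt_one_iff.2 (neg_neg_of_pos ht))
    convert! (hasSum_geometric_of_norm_lt_one hlt).mul_left (z * exp (-t)) using 1
    · ext n
      rw [← pow_succ', mul_pow, ← exp_nat_mul]
      push_cast
      ring_nf
    · rw [boseIntegrand, ← div_eq_mul_inv, exp_neg,
        ← mul_div_mul_left z _ (inv_ne_zero (exp_ne_zero t)), mul_sub,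
        inv_mul_cancel₀ (exp_ne_zero _), mul_comm z]
  · refine Summable.of_nonneg_of_le (fun n ↦ by positivity) (fun n ↦ ?_)
      ((summable_nat_add_iff 1).2 (Real.summable_one_div_nat_rpow.2 hs))
    rw [norm_pow, Nat.cast_succ]
    gcongr
    exact pow_le_one₀ (norm_nonneg z) hz

lemma mellin_boseIntegrand_one (hz : ‖z‖ ≤ 1) (hz1 : z ≠ 1) :
    mellin (boseIntegrand z) 1 = -log (1 - z) := by
  have hslit (t : ℝ) (ht : 0 ≤ t) : 1 - z * exp (-t) ∈ slitPlane := by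
    refine one_sub_mem_slitPlane_s12 ?_ fun h ↦ exp_sub_ne_zero hz hz1 ht ?_
    · rw [norm_mul, ← ofReal_neg, norm_exp_ofReal]
      exact mul_le_one₀ hz (Real.exp_nonneg _) (Real.exp_le_one_iff.2 (neg_nonpos.2 ht))
    · rw [exp_neg, mul_inv_eq_one₀ (exp_ne_zero _)] at h
      exact sub_eq_zero.2 h.symm
  have hderiv : ∀ t ∈ Ici (0 : ℝ),
      HasDerivAt (fun t : ℝ ↦ log (1 - z * exp (-t))) (boseIntegrand z t) t := fun t ht ↦ by
    have h := ((hasDerivAt_id t).ofReal_comp.neg.cexp.const_mul z).const_sub 1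
    convert! h.clog_real (hslit t ht) using 1
    have hnum : exp t * (1 - z * exp (-t)) = exp t - z := by
      rw [mul_sub, mul_one, mul_left_comm, ← exp_add, add_neg_cancel, exp_zero, mul_one]
    rw [boseIntegrand, ← hnum, ← div_div, div_eq_mul_inv z, ← exp_neg]
    simp
  have hlim : Tendsto (fun t : ℝ ↦ log (1 - z * exp (-t))) atTop (𝓝 0) := by
    have hexp : Tendsto (fun t : ℝ ↦ exp (-t)) atTop (𝓝 0) := by
      simpa [Function.comp_def] using
        (continuous_ofReal.tendsto 0).comp Real.tendsto_exp_neg_atTop_nhds_zero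
    have h1 : Tendsto (fun t : ℝ ↦ 1 - z * exp (-t)) atTop (𝓝 1) := by
      simpa using (hexp.const_mul z).const_sub 1
    simpa using h1.clog one_mem_slitPlane
  have hint : IntegrableOn (boseIntegrand z) (Ioi 0) := by
    have := mellinConvergent_of_isBigO_rpow_exp (s := 1) one_pos
      (locallyIntegrableOn_boseIntegrand hz hz1) (isBigO_boseIntegrand_atTop hz)
      (isBigO_boseIntegrand_nhdsGT_zero hz hz1) (by simp)
    simpa [MellinConvergent] using this
  simpa [mellin] using integral_Ioi_of_hasDerivAt_of_tendsto' hderiv hint hlim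

lemma expZeta_one {x : ℝ} (hx : (x : UnitAddCircle) ≠ 0) :
    expZeta x 1 = -log (1 - exp (2 * Real.pi * I * x)) := by
  set z := exp (2 * Real.pi * I * x) with hz
  have hz' : ‖z‖ ≤ 1 := by
    rw [hz, norm_exp]
    simp
  have hz1 : z ≠ 1 := fun h ↦ hx <| by
    obtain ⟨n, hn⟩ := exp_eq_one_iff.1 h
    have hxn : (x : ℂ) = n := mul_left_cancel₀ two_pi_I_ne_zero (hn.trans (mul_comm _ _))
    have hxn' : x = n := by exact_mod_cast hxn
    exact (AddCircle.coe_eq_zero_iff _).2 ⟨n, by rw [hxn', zsmul_one]⟩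
  rw [← mellin_boseIntegrand_one hz' hz1]
  have hofReal : Tendsto ((↑) : ℝ → ℂ) (𝓝[>] 1) (𝓝 1) :=
    (continuous_ofReal.tendsto' 1 1 ofReal_one).mono_left nhdsWithin_le_nhds
  have hzeta : Tendsto (fun s : ℝ ↦ Gamma s * expZeta x s) (𝓝[>] 1) (𝓝 (expZeta x 1)) := by
    have h := (differentiableAt_Gamma_one.continuousAt.mul
      (differentiableAt_expZeta x 1 (Or.inr hx)).continuousAt).tendsto.comp hofReal
    simpa [Function.comp_def] using h
  have hmellin := (mellin_differentiableAt_of_isBigO_rpow_exp (s := 1) one_pos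
      (locallyIntegrableOn_boseIntegrand hz' hz1) (isBigO_boseIntegrand_atTop hz')
      (isBigO_boseIntegrand_nhdsGT_zero hz' hz1) (by simp)).continuousAt.tendsto.comp hofReal
  refine tendsto_nhds_unique hzeta (hmellin.congr' ?_)
  filter_upwards [self_mem_nhdsWithin] with s hs
  have hs' : 1 < (s : ℂ).re := hs
  refine (hasSum_mellin_boseIntegrand hz' hs').unique ?_
  have hs0 : (s : ℂ) ≠ 0 := ne_zero_of_one_lt_re hs'
  have h := ((hasSum_nat_add_iff' 1).2 (hasSum_expZeta_of_one_lt_re x hs')).mul_left (Gamma s)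
  simp only [Finset.sum_range_one, Nat.cast_zero, zero_cpow hs0, div_zero, sub_zero] at h
  refine h.congr_fun fun n ↦ ?_
  rw [hz, ← exp_nat_mul, mul_div_assoc, mul_comm (_ * _) ((n + 1 : ℕ) : ℂ)]
  push_cast
  rfl

lemma arg_one_sub_exp {y : ℝ} (hy : y ∈ Ioo 0 1) :
    arg (1 - exp (2 * Real.pi * I * y)) = Real.pi * (y - 1 / 2) := by
  have hsin : 0 < 2 * Real.sin (Real.pi * y) :=
    mul_pos two_pos (Real.sin_pos_of_pos_of_lt_pi (mul_pos Real.pi_pos hy.1)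
      (mul_lt_of_lt_one_right Real.pi_pos hy.2))
  have hpolar : 1 - exp (2 * Real.pi * I * y) = (2 * Real.sin (Real.pi * y) : ℝ) *
      (cos (Real.pi * (y - 1 / 2) : ℝ) + sin (Real.pi * (y - 1 / 2) : ℝ) * I) := by
    have h : (Real.pi * (y - 1 / 2) : ℝ) = Real.pi * y - Real.pi / 2 := by ring
    rw [h, ← ofReal_cos, ← ofReal_sin, Real.cos_sub_pi_div_two, Real.sin_sub_pi_div_two]
    have hexp : exp (2 * Real.pi * I * y) =
        cos (2 * (Real.pi * y)) + sin (2 * (Real.pi * y)) * I := by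
      rw [← exp_mul_I]
      ring_nf
    rw [hexp, cos_two_mul, sin_two_mul]
    push_cast
    linear_combination (-2) * sin_sq_add_cos_sq (Real.pi * y)
  rw [hpolar, arg_mul_cos_add_sin_mul_I hsin]
  constructor <;> nlinarith [Real.pi_pos, hy.1, hy.2]

lemma expZeta_neg_one {y : ℝ} (hy : y ∈ Ioo 0 1) (hy0 : (y : UnitAddCircle) ≠ 0) :
    expZeta (-y : UnitAddCircle) 1 = starRingEnd ℂ (expZeta y 1) := by
  have harg : arg (1 - exp (2 * Real.pi * I * y)) ≠ Real.pi := by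
    rw [arg_one_sub_exp hy]
    nlinarith [Real.pi_pos, hy.2]
  rw [← AddCircle.coe_neg, expZeta_one (by simpa using hy0), expZeta_one hy0, map_neg,
    ← log_conj _ harg, map_sub, ← exp_conj]
  simp [conj_ofNat]

lemma sinZeta_one {x : ℝ} (hx : (x : UnitAddCircle) ≠ 0) :
    sinZeta x 1 = Real.pi * (1 / 2 - Int.fract x) := by
  rw [← AddCircle.coe_fract x] at hx ⊢
  set y := Int.fract x
  have hy : y ∈ Ioo 0 1 :=
    ⟨(Int.fract_nonneg x).lt_of_ne' fun (h : y = 0) ↦ hx (by rw [h, AddCircle.coe_zero]),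
      Int.fract_lt_one x⟩
  have him : (expZeta y 1).im = Real.pi * (1 / 2 - y) := by
    rw [expZeta_one hx, neg_im, log_im, arg_one_sub_exp hy]
    ring
  rw [sinZeta_eq, expZeta_neg_one hy hx, sub_conj, him]
  push_cast
  field [I_ne_zero]

end Polylogarithm

section QBinomial

open Finset

variable {R : Type*} [CommRing R]

/-- The Gaussian binomial coefficient with upper index `n` and lower index `k`, evaluated at an
element `q` of a commutative ring. It is given by its Pascal recursion, because the quotient of
`q`-factorials makes no sense at roots of unity. -/
def qBinomial (q : R) : ℕ → ℕ → R
  | _, 0 => 1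
  | 0, _ + 1 => 0
  | n + 1, k + 1 => q ^ (k + 1) * qBinomial q n (k + 1) + qBinomial q n k

variable (q : R)

lemma qBinomial_zero_right (n : ℕ) : qBinomial q n 0 = 1 := by cases n <;> rfl

lemma qBinomial_succ_succ (n k : ℕ) :
    qBinomial q (n + 1) (k + 1) = q ^ (k + 1) * qBinomial q n (k + 1) + qBinomial q n k := rfl

lemma qBinomial_eq_zero_of_lt {n k : ℕ} (h : n < k) : qBinomial q n k = 0 := by
  induction n generalizing k with
  | zero =>
    obtain ⟨k, rfl⟩ := Nat.exists_eq_succ_of_ne_zero h.ne'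
    rfl
  | succ n ih =>
    obtain ⟨k, rfl⟩ := Nat.exists_eq_succ_of_ne_zero (Nat.zero_lt_of_lt h).ne'
    rw [qBinomial_succ_succ, ih (by omega), ih (by omega), mul_zero, zero_add]

/-- Both sides are the `q`-analogue of `n! / (k! (n - k - 1)!)`. -/
lemma one_sub_pow_mul_qBinomial_succ_right {n k : ℕ} (h : k ≤ n) :
    (1 - q ^ (k + 1)) * qBinomial q n (k + 1) = (1 - q ^ (n - k)) * qBinomial q n k := by
  induction n generalizing k with
  | zero =>
    obtain rfl : k = 0 := by omega
    simp [qBinomial]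
  | succ n ih =>
    rcases h.eq_or_lt with rfl | h
    · simp [qBinomial_eq_zero_of_lt]
    rw [qBinomial_succ_succ]
    rcases k with _ | k
    · have ih₀ := ih (Nat.zero_le n)
      simp only [qBinomial_zero_right, Nat.sub_zero, zero_add, pow_one] at ih₀ ⊢
      linear_combination q * ih₀
    · have ih₁ := ih (Nat.lt_succ_iff.1 h)
      have ih₂ := ih (Nat.le_of_succ_le (Nat.lt_succ_iff.1 h))
      have hpow : q ^ (n - k) = q * q ^ (n - (k + 1)) := by
        rw [← pow_succ']
        congr 1
        omega
      rw [qBinomial_succ_succ, Nat.succ_sub_succ]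
      rw [hpow] at ih₂ ⊢
      linear_combination q ^ (k + 2) * ih₁ + ih₂

lemma qBinomial_succ_succ' {n k : ℕ} (h : k ≤ n) :
    qBinomial q (n + 1) (k + 1) = qBinomial q n (k + 1) + q ^ (n - k) * qBinomial q n k := by
  rw [qBinomial_succ_succ]
  linear_combination -one_sub_pow_mul_qBinomial_succ_right q h

lemma one_sub_pow_mul_qBinomial_succ_left {n k : ℕ} (h : k ≤ n + 1) :
    (1 - q ^ (n + 1 - k)) * qBinomial q (n + 1) k = (1 - q ^ (n + 1)) * qBinomial q n k := by
  rcases k with _ | k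
  · simp only [qBinomial_zero_right, Nat.sub_zero]
  · have hpow : q ^ (n + 1) = q ^ (k + 1) * q ^ (n - k) := by
      rw [← pow_add]
      congr 1
      omega
    rw [qBinomial_succ_succ, hpow, Nat.succ_sub_succ]
    linear_combination -one_sub_pow_mul_qBinomial_succ_right q (Nat.succ_le_succ_iff.1 h)

lemma alternating_sum_qBinomial_add_two (n : ℕ) :
    ∑ k ∈ range (n + 3), (-1) ^ k * qBinomial q (n + 2) k =
      (1 - q ^ (n + 1)) * ∑ k ∈ range (n + 1), (-1) ^ k * qBinomial q n k := by
  have hpascal : ∑ k ∈ range (n + 3), (-1) ^ k * qBinomial q (n + 2) k =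
      ∑ k ∈ range (n + 3), (-1) ^ k * qBinomial q (n + 1) k -
        ∑ k ∈ range (n + 2), (-1) ^ k * (q ^ (n + 1 - k) * qBinomial q (n + 1) k) := by
    rw [sum_range_succ' _ (n + 2), sum_range_succ' _ (n + 2), qBinomial_zero_right,
      qBinomial_zero_right, add_sub_right_comm, ← sum_sub_distrib]
    congr 1
    refine sum_congr rfl fun k hk ↦ ?_
    rw [qBinomial_succ_succ' q (Nat.lt_succ_iff.1 (mem_range.1 hk))]
    ring
  have hextend (m : ℕ) : ∑ k ∈ range (m + 2), (-1) ^ k * qBinomial q m k =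
      ∑ k ∈ range (m + 1), (-1) ^ k * qBinomial q m k := by
    rw [sum_range_succ, qBinomial_eq_zero_of_lt q m.lt_succ_self, mul_zero, add_zero]
  rw [hpascal, hextend, ← hextend n, ← sum_sub_distrib, mul_sum]
  refine sum_congr rfl fun k hk ↦ ?_
  linear_combination
    (-1) ^ k * one_sub_pow_mul_qBinomial_succ_left q (Nat.lt_succ_iff.1 (mem_range.1 hk))

lemma alternating_sum_qBinomial_two_mul (h : ℕ) :
    ∑ k ∈ range (2 * h + 1), (-1) ^ k * qBinomial q (2 * h) k =
      ∏ i ∈ range h, (1 - q ^ (2 * i + 1)) := by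
  induction h with
  | zero => simp [qBinomial]
  | succ h ih =>
    rw [prod_range_succ, ← ih, mul_comm (∑ k ∈ range (2 * h + 1), _)]
    exact alternating_sum_qBinomial_add_two q (2 * h)

variable {q}

lemma qBinomial_pred_of_isPrimitiveRoot [IsDomain R] {n k : ℕ} (hq : IsPrimitiveRoot q n)
    (hk : k < n) : (-1) ^ k * q ^ (k + 1).choose 2 * qBinomial q (n - 1) k = 1 := by
  induction k with
  | zero => simp [qBinomial_zero_right]
  | succ k ih =>
    have hstep : q ^ (k + 1) * qBinomial q (n - 1) (k + 1) = -qBinomial q (n - 1) k := by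
      have hpow : q ^ (k + 1) * q ^ (n - 1 - k) = 1 := by
        rw [← pow_add, ← hq.pow_eq_one]
        congr 1
        omega
      have hne : 1 - q ^ (k + 1) ≠ 0 :=
        sub_ne_zero.2 (hq.pow_ne_one_of_pos_of_lt k.succ_ne_zero hk).symm
      apply mul_left_cancel₀ hne
      linear_combination
        q ^ (k + 1) * one_sub_pow_mul_qBinomial_succ_right q (n := n - 1) (k := k) (by omega) -
          qBinomial q (n - 1) k * hpow
    have ih := ih (Nat.lt_of_succ_lt hk)
    rw [Nat.choose_succ_succ' (k + 1) 1, Nat.choose_one_right]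
    linear_combination ih - (-1) ^ k * q ^ (k + 1).choose 2 * hstep

end QBinomial

section QuadraticGaussSum

open Finset Complex
open scoped ComplexOrder

variable {N h : ℕ} [NeZero N] {R : Type*} [CommRing R] {ψ : AddChar (ZMod N) R}

lemma isPrimitiveRoot_addChar_neg_two (hN : N = 2 * h + 1) (hψ : ψ.IsPrimitive) :
    IsPrimitiveRoot (ψ (-2)) N := by
  refine .mk_of_lt _ (NeZero.pos N) ?_ fun l hl hlN hpow ↦ ?_
  · rw [← AddChar.map_nsmul_eq_pow]
    simp
  · rw [← AddChar.map_nsmul_eq_pow, hψ.zmod_char_eq_one_iff] at hpow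
    have hdvd : N ∣ l * 2 := by
      rw [← ZMod.natCast_eq_zero_iff]
      simpa using hpow
    have hcop : Nat.Coprime N 2 := by
      rw [Nat.coprime_two_right, hN]
      exact odd_two_mul_add_one h
    exact Nat.not_dvd_of_pos_of_lt hl hlN (hcop.dvd_of_dvd_mul_right hdvd)

lemma addChar_natCast_sq {A : Type*} [CommRing A] (ψ : AddChar A R) (n : ℕ) :
    ψ (n ^ 2) = ∏ i ∈ range n, ψ (2 * i + 1) := by
  induction n with
  | zero => simp
  | succ n ih =>
    rw [prod_range_succ, ← ih, ← AddChar.map_add_eq_mul]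
    congr 1
    push_cast
    ring

variable [IsDomain R]

lemma sum_addChar_mul_add_one (hN : N = 2 * h + 1) (hψ : ψ.IsPrimitive) :
    ∑ x, ψ (x * (x + 1)) = ∏ i ∈ range h, (1 - ψ (-2) ^ (2 * i + 1)) := by
  have hsum : ∑ x, ψ (x * (x + 1)) = ∑ k ∈ range N, ψ ((k : ZMod N) * (k + 1)) :=
    sum_nbij' ZMod.val (↑) (fun x _ ↦ mem_range.2 x.val_lt) (fun _ _ ↦ mem_univ _)
      (fun x _ ↦ x.natCast_zmod_val) (fun k hk ↦ ZMod.val_cast_of_lt (mem_range.1 hk))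
      (fun x _ ↦ by rw [x.natCast_zmod_val])
  rw [hsum, ← alternating_sum_qBinomial_two_mul, ← hN]
  refine sum_congr rfl fun k hk ↦ ?_
  have hroot := qBinomial_pred_of_isPrimitiveRoot (isPrimitiveRoot_addChar_neg_two hN hψ)
    (mem_range.1 hk)
  have hinv : ψ ((k : ZMod N) * (k + 1)) * ψ (-2) ^ (k + 1).choose 2 = 1 := by
    have htri : ((k : ZMod N) + 1) * k = (k + 1).choose 2 * 2 := by
      simpa using congrArg (Nat.cast (R := ZMod N)) (Nat.add_one_mul_choose_eq k 1)
    rw [← AddChar.map_nsmul_eq_pow, ← AddChar.map_add_eq_mul, ← AddChar.map_zero_eq_one ψ]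
    congr 1
    rw [nsmul_eq_mul]
    linear_combination htri
  rw [show N - 1 = 2 * h by omega] at hroot
  linear_combination (-1) ^ k * qBinomial (ψ (-2)) (2 * h) k * hinv -
    ψ ((k : ZMod N) * (k + 1)) * hroot

lemma sum_addChar_sq (hN : N = 2 * h + 1) (hψ : ψ.IsPrimitive) :
    ∑ x, ψ (x ^ 2) = ∏ i ∈ range h, (ψ (2 * i + 1) - ψ (-(2 * i + 1))) := by
  have hcast : (2 * h + 1 : ZMod N) = 0 := by
    rw [← ZMod.natCast_self N, hN]
    push_cast
    rfl
  have hshift : ∑ x, ψ (x ^ 2) = ψ (h ^ 2) * ∑ x, ψ (x * (x + 1)) := by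
    rw [← Equiv.sum_comp (Equiv.addRight (h + 1 : ZMod N)), mul_sum]
    refine sum_congr rfl fun x _ ↦ ?_
    rw [← AddChar.map_add_eq_mul, Equiv.coe_addRight]
    congr 1
    linear_combination (x + 1) * hcast
  rw [hshift, sum_addChar_mul_add_one hN hψ, addChar_natCast_sq, ← prod_mul_distrib]
  refine prod_congr rfl fun i _ ↦ ?_
  rw [mul_sub, mul_one, ← AddChar.map_nsmul_eq_pow, ← AddChar.map_add_eq_mul]
  congr 2
  simp
  ring

lemma stdAddChar_sub_stdAddChar_neg {N : ℕ} [NeZero N] (j : ℕ) :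
    ZMod.stdAddChar (j : ZMod N) - ZMod.stdAddChar (-(j : ZMod N)) =
      2 * I * Real.sin (2 * Real.pi * j / N) := by
  have hpos := ZMod.stdAddChar_coe (N := N) j
  have hneg := ZMod.stdAddChar_coe (N := N) (-j)
  push_cast at hpos hneg ⊢
  rw [hpos, hneg, sin]
  ring_nf
  rw [I_sq]
  ring_nf

lemma sin_mul_sin_add_neg {m i : ℕ} (hi : i < m) :
    Real.sin (2 * Real.pi * (2 * i + 1 : ℕ) / (4 * m + 1 : ℕ)) *
      Real.sin (2 * Real.pi * (2 * (m + i) + 1 : ℕ) / (4 * m + 1 : ℕ)) < 0 := by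
  have him : (i : ℝ) + 1 ≤ m := by exact_mod_cast hi
  have hden : (0 : ℝ) < (4 * m + 1 : ℕ) := Nat.cast_pos.2 (Nat.succ_pos _)
  have hpi := Real.pi_pos
  refine mul_neg_of_pos_of_neg (Real.sin_pos_of_pos_of_lt_pi (by positivity) ?_) ?_
  · rw [div_lt_iff₀ hden]
    push_cast
    nlinarith
  · rw [← Real.sin_sub_two_pi]
    refine Real.sin_neg_of_neg_of_neg_pi_lt ?_ ?_
    · rw [sub_neg, div_lt_iff₀ hden]
      push_cast
      nlinarith
    · rw [lt_sub_iff_add_lt, lt_div_iff₀ hden]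
      push_cast
      nlinarith

lemma sum_stdAddChar_sq_pos {N : ℕ} [NeZero N] (hN : N % 4 = 1) :
    0 < ∑ x : ZMod N, ZMod.stdAddChar (x ^ 2) := by
  obtain ⟨m, rfl⟩ : ∃ m, N = 4 * m + 1 := ⟨N / 4, by omega⟩
  rw [sum_addChar_sq (h := m + m) (by omega) (ZMod.isPrimitive_stdAddChar _), prod_range_add,
    ← prod_mul_distrib]
  refine prod_pos fun i hi ↦ ?_
  have hi' := stdAddChar_sub_stdAddChar_neg (N := 4 * m + 1) (2 * i + 1)
  have hmi := stdAddChar_sub_stdAddChar_neg (N := 4 * m + 1) (2 * (m + i) + 1)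
  have hneg := sin_mul_sin_add_neg (mem_range.1 hi)
  set s := Real.sin (2 * Real.pi * (2 * i + 1 : ℕ) / (4 * m + 1 : ℕ))
  set t := Real.sin (2 * Real.pi * (2 * (m + i) + 1 : ℕ) / (4 * m + 1 : ℕ))
  push_cast at hi' hmi ⊢
  have hprod : (2 * I * s) * (2 * I * t) = ((-4 * (s * t) : ℝ) : ℂ) := by
    push_cast
    linear_combination (4 * s * t : ℂ) * I_sq
  rw [hi', hmi, hprod, zero_lt_real]
  linarith

lemma gaussSum_quadraticChar_eq_sum_sq {F R : Type*} [Field F] [Fintype F] [DecidableEq F]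
    [CommRing R] [IsDomain R] (hF : ringChar F ≠ 2) {ψ : AddChar F R} (hψ : ψ ≠ 1) :
    gaussSum ((quadraticChar F).ringHomComp (Int.castRingHom R)) ψ = ∑ x, ψ (x ^ 2) := by
  have hcard (a : F) : (#{x : F | x ^ 2 = a} : R) = (quadraticChar F a : R) + 1 := by
    have h := quadraticChar_card_sqrts hF a
    rw [Set.toFinset_ofPred] at h
    exact_mod_cast congrArg (Int.cast (R := R)) h
  calc gaussSum ((quadraticChar F).ringHomComp (Int.castRingHom R)) ψ
      = ∑ a, (quadraticChar F a : R) * ψ a + ∑ a, ψ a := by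
        rw [AddChar.sum_eq_zero_of_ne_one hψ, add_zero]
        rfl
    _ = ∑ a, ∑ x with x ^ 2 = a, ψ a := by
        simp only [← sum_add_distrib, sum_const, nsmul_eq_mul, hcard, add_one_mul]
    _ = ∑ x, ψ (x ^ 2) := sum_fiberwise' univ (· ^ 2) ψ

end QuadraticGaussSum

section Polya

open Filter Topology Finset Complex HurwitzZeta

variable {N : ℕ} [NeZero N] {χ : DirichletCharacter ℂ N}

lemma sum_char_mul_val_eq_zero (hχ : χ.Even) (hχ1 : χ ≠ 1) :
    ∑ a : ZMod N, χ a * a.val = 0 := by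
  have hN : N ≠ 1 := fun h ↦ hχ1 (DirichletCharacter.level_one' χ h)
  have hval (a : ZMod N) : χ a * ((-a).val + a.val : ℂ) = χ a * N := by
    rcases eq_or_ne a 0 with rfl | ha
    · rw [χ.map_zero' hN, zero_mul, zero_mul]
    · rw [ZMod.neg_val, if_neg ha, Nat.cast_sub a.val_lt.le, sub_add_cancel]
  have hrefl : ∑ a : ZMod N, χ a * ((-a).val : ℂ) = ∑ a : ZMod N, χ a * (a.val : ℂ) := by
    rw [← Equiv.sum_comp (Equiv.neg (ZMod N))]
    simp only [Equiv.neg_apply, neg_neg, hχ.eval_neg]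
  have hdouble : 2 * ∑ a : ZMod N, χ a * (a.val : ℂ) = 0 := by
    calc 2 * ∑ a : ZMod N, χ a * (a.val : ℂ)
        = ∑ a : ZMod N, χ a * ((-a).val + a.val : ℂ) := by
          rw [two_mul]
          nth_rw 1 [← hrefl]
          simp only [mul_add, sum_add_distrib]
      _ = 0 := by
          rw [sum_congr rfl fun a _ ↦ hval a, ← sum_mul, χ.sum_eq_zero_of_ne_one hχ1, zero_mul]
  exact (mul_eq_zero.1 hdouble).resolve_left two_ne_zero

lemma sum_char_mul_sin (hχ : χ.Even) (hprim : χ.IsPrimitive) (x : ℝ) (n : ℕ) :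
    ∑ a : ZMod N, χ a * Real.sin (2 * Real.pi * (x - a.val / N : ℝ) * n) =
      gaussSum χ ZMod.stdAddChar * (χ⁻¹ n * Real.sin (2 * Real.pi * x * n)) := by
  have hshift : ∑ a : ZMod N, χ a * ZMod.stdAddChar ((n : ZMod N) * a) =
      χ⁻¹ n * gaussSum χ ZMod.stdAddChar :=
    gaussSum_mulShift_of_isPrimitive ZMod.stdAddChar hprim n
  have hshift_neg : ∑ a : ZMod N, χ a * ZMod.stdAddChar (-((n : ZMod N) * a)) =
      χ⁻¹ n * gaussSum χ ZMod.stdAddChar := by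
    rw [← hshift, ← Equiv.sum_comp (Equiv.neg (ZMod N))]
    simp only [Equiv.neg_apply, mul_neg, neg_neg, hχ.eval_neg]
  have hstd (a : ZMod N) :
      ZMod.stdAddChar ((n : ZMod N) * a) = exp (2 * Real.pi * (a.val / N) * n * I) := by
    have h := ZMod.stdAddChar_coe (N := N) (n * a.val : ℕ)
    push_cast [ZMod.natCast_zmod_val] at h
    rw [h]
    ring_nf
  have hsin (a : ZMod N) : χ a * (Real.sin (2 * Real.pi * (x - a.val / N : ℝ) * n) : ℂ) =
      (exp (-(2 * Real.pi * x * n) * I) * (χ a * ZMod.stdAddChar ((n : ZMod N) * a)) -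
        exp (2 * Real.pi * x * n * I) * (χ a * ZMod.stdAddChar (-((n : ZMod N) * a)))) *
      (I / 2) := by
    rw [AddChar.map_neg_eq_inv, hstd, ← exp_neg, ofReal_sin, sin]
    push_cast
    rw [mul_left_comm, ← exp_add, mul_left_comm, ← exp_add]
    ring_nf
  rw [sum_congr rfl fun a _ ↦ hsin a, ← sum_mul, sum_sub_distrib, ← mul_sum, ← mul_sum, hshift,
    hshift_neg, ofReal_sin, sin]
  push_cast
  ring

lemma hasSum_char_mul_sin (hχ : χ.Even) (hprim : χ.IsPrimitive) (x : ℝ) {s : ℂ} (hs : 1 < s.re) :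
    HasSum (fun n : ℕ ↦ gaussSum χ ZMod.stdAddChar *
        (χ⁻¹ n * Real.sin (2 * Real.pi * x * n) / (n : ℂ) ^ s))
      (∑ a : ZMod N, χ a * sinZeta (x - a.val / N : ℝ) s) := by
  refine (hasSum_sum fun a _ ↦ (hasSum_nat_sinZeta _ hs).mul_left (χ a)).congr_fun fun n ↦ ?_
  rw [← mul_div_assoc, ← sum_char_mul_sin hχ hprim, sum_div]
  exact sum_congr rfl fun a _ ↦ mul_div_assoc _ _ _

lemma fract_sub_val_div {x : ℝ} (hx : x ∈ Set.Ico 0 1) {a : ZMod N}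
    (ha : (a.val : ℝ) ≠ N * x) :
    Int.fract (x - a.val / N) = x - a.val / N + if a.val < N * x then 0 else 1 := by
  have hN : (0 : ℝ) < N := Nat.cast_pos.2 (NeZero.pos N)
  have ha1 : (a.val : ℝ) / N < 1 := (div_lt_one hN).2 (Nat.cast_lt.2 a.val_lt)
  have ha0 : (0 : ℝ) ≤ a.val / N := by positivity
  have hiff : (a.val : ℝ) < N * x ↔ (a.val : ℝ) / N < x := (div_lt_iff₀' hN).symm
  split_ifs with h
  · rw [add_zero, Int.fract_eq_self]
    constructor <;> linarith [hiff.1 h, hx.2]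
  · rw [← Int.fract_add_one, Int.fract_eq_self]
    constructor <;> linarith [(lt_div_iff₀' hN).2 ((not_lt.1 h).lt_of_ne' ha), hx.1]

lemma sum_char_mul_sinZeta_one (hχ : χ.Even) (hχ1 : χ ≠ 1) {x : ℝ} (hx : x ∈ Set.Ico 0 1)
    (hNx : ∀ k : ℤ, N * x ≠ k) :
    ∑ a : ZMod N, χ a * sinZeta (x - a.val / N : ℝ) 1 =
      Real.pi * ∑ a : ZMod N with a.val < N * x, χ a := by
  have hterm (a : ZMod N) : χ a * sinZeta (x - a.val / N : ℝ) 1 =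
      Real.pi * ((if a.val < N * x then χ a else 0) + (χ a * a.val) * (N : ℂ)⁻¹ -
        χ a * (1 / 2 + x)) := by
    have hne : ((x - a.val / N : ℝ) : UnitAddCircle) ≠ 0 := fun h ↦ by
      obtain ⟨k, hk⟩ := (AddCircle.coe_eq_zero_iff _).1 h
      refine hNx (k * N + a.val) ?_
      have hN : (N : ℝ) ≠ 0 := NeZero.ne _
      rw [zsmul_one, eq_sub_iff_add_eq] at hk
      rw [← hk]
      push_cast
      field
    rw [sinZeta_one hne, fract_sub_val_div hx (hNx a.val).symm]
    split_ifs <;> push_cast <;> ring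
  rw [sum_congr rfl fun a _ ↦ hterm a, ← mul_sum, sum_sub_distrib, sum_add_distrib, ← sum_mul,
    ← sum_mul, sum_char_mul_val_eq_zero hχ hχ1, χ.sum_eq_zero_of_ne_one hχ1, zero_mul, zero_mul,
    add_zero, sub_zero, ← sum_filter]

theorem tendsto_gaussSum_mul_tsum_char_mul_sin (hχ : χ.Even) (hχ1 : χ ≠ 1) (hprim : χ.IsPrimitive)
    {x : ℝ} (hx : x ∈ Set.Ico 0 1) (hNx : ∀ k : ℤ, N * x ≠ k) :
    Tendsto (fun s : ℝ ↦ gaussSum χ ZMod.stdAddChar *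
        ∑' n : ℕ, χ⁻¹ n * Real.sin (2 * Real.pi * x * n) / (n : ℂ) ^ (s : ℂ))
      (𝓝[>] 1) (𝓝 (Real.pi * ∑ a : ZMod N with a.val < N * x, χ a)) := by
  have hcont : Continuous fun s : ℝ ↦ ∑ a : ZMod N, χ a * sinZeta (x - a.val / N : ℝ) s :=
    continuous_finsetSum _ fun a _ ↦ continuous_const.mul
      ((differentiableAt_sinZeta _).continuous.comp continuous_ofReal)
  rw [← sum_char_mul_sinZeta_one hχ hχ1 hx hNx, ← ofReal_one]
  refine ((hcont.tendsto 1).mono_left nhdsWithin_le_nhds).congr' ?_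
  filter_upwards [self_mem_nhdsWithin] with s hs
  rw [← tsum_mul_left]
  exact (hasSum_char_mul_sin hχ hprim x (s := s) hs).tsum_eq.symm

lemma isPrimitive_of_prime_level {p : ℕ} [Fact p.Prime] {χ : DirichletCharacter ℂ p} (hχ : χ ≠ 1) :
    χ.IsPrimitive :=
  ((Nat.dvd_prime Fact.out).1 χ.conductor_dvd_level).resolve_left fun h ↦
    hχ (χ.eq_one_iff_conductor_eq_one.2 h)

end Polya

section Positivity

lemma sin_two_pi_mul_one_div_eight_mul (n : ℕ) :
    Real.sin (2 * Real.pi * (1 / 8) * n) = √2 / 2 * (ZMod.χ₈' n : ℤ) +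
      if 2 ∣ n then ((ZMod.χ₄ (n / 2 : ℕ) : ℤ) : ℝ) else 0 := by
  have hχ₈' (a : ZMod 8) : ZMod.χ₈' (a + 4) = -ZMod.χ₈' a := by decide +revert
  have hχ₄ (a : ZMod 4) : ZMod.χ₄ (a + 2) = -ZMod.χ₄ a := by decide +revert
  induction n using Nat.strong_induction_on with | _ n ih
  by_cases hn : n < 4
  · have hthree : 2 * Real.pi * 8⁻¹ * 3 = Real.pi - Real.pi / 4 := by ring
    have hone : 2 * Real.pi * 8⁻¹ = Real.pi / 4 := by ring
    have htwo : 2 * Real.pi * 8⁻¹ * 2 = Real.pi / 2 := by ring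
    interval_cases n
    · simp
    · simp [hone]
    · simp [htwo, show ZMod.χ₈' 2 = 0 by decide]
    · simp [hthree, show ZMod.χ₈' 3 = 1 by decide]
  · obtain ⟨m, rfl⟩ := Nat.exists_eq_add_of_le' (not_lt.1 hn)
    have hangle : 2 * Real.pi * (1 / 8) * (m + 4 : ℕ) = 2 * Real.pi * (1 / 8) * m + Real.pi := by
      push_cast
      ring
    rw [hangle, Real.sin_add_pi, ih m (by omega), show (m + 4) / 2 = m / 2 + 2 by omega]
    simp only [Nat.cast_add, Nat.cast_ofNat, hχ₈', hχ₄, show 2 ∣ m + 4 ↔ 2 ∣ m by omega]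
    split_ifs <;> push_cast <;> ring

variable {s : ℝ}

lemma summable_div_rpow {a : ℕ → ℝ} (ha : ∀ n, |a n| ≤ 1) (hs : 1 < s) :
    Summable fun n : ℕ ↦ a n / (n : ℝ) ^ s := by
  refine .of_norm_bounded (Real.summable_one_div_nat_rpow.2 hs) fun n ↦ ?_
  rw [norm_div, Real.norm_of_nonneg (Real.rpow_nonneg n.cast_nonneg s)]
  gcongr
  exact ha n

lemma abs_mul_char_le_one {x : ℝ} (hx : |x| ≤ 1) {N : ℕ} {χ : MulChar (ZMod N) ℤ}
    (hχ : χ.IsQuadratic) (a : ZMod N) : |x * χ a| ≤ 1 := by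
  rcases hχ a with h | h | h <;> simp [h, hx]

variable {f : ℕ →*₀ ℝ}

lemma tsum_div_rpow_nonneg (hf : ∀ n, |f n| ≤ 1) (hs : 1 < s) :
    0 ≤ ∑' n : ℕ, f n / (n : ℝ) ^ s := by
  let summand : ℕ →*₀ ℝ :=
    { toFun n := f n / (n : ℝ) ^ s
      map_zero' := by rw [map_zero, zero_div]
      map_one' := by simp
      map_mul' m n := by
        rw [map_mul, Nat.cast_mul, Real.mul_rpow m.cast_nonneg n.cast_nonneg, mul_div_mul_comm] }
  have hprod := EulerProduct.eulerProduct_completely_multiplicative_hasProd (f := summand)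
    (summable_div_rpow hf hs).norm
  refine hprod.nonneg fun p ↦ inv_nonneg.2 (sub_nonneg.2 ?_)
  have hp : 1 ≤ (p : ℝ) ^ s := Real.one_le_rpow (mod_cast p.2.one_lt.le) (by linarith)
  exact div_le_one_of_le₀ ((le_of_abs_le (hf p)).trans hp) (by positivity)

lemma tsum_mul_char_div_rpow_nonneg (hf : ∀ n, |f n| ≤ 1) {N : ℕ} {χ : MulChar (ZMod N) ℤ}
    (hχ : χ.IsQuadratic) (hs : 1 < s) : 0 ≤ ∑' n : ℕ, f n * (χ n : ℤ) / (n : ℝ) ^ s :=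
  tsum_div_rpow_nonneg (f :=
    { toFun n := f n * (χ n : ℤ)
      map_zero' := by rw [map_zero, zero_mul]
      map_one' := by simp
      map_mul' m n := by simp only [map_mul, Nat.cast_mul, Int.cast_mul, mul_mul_mul_comm] })
    (fun n ↦ abs_mul_char_le_one (hf n) hχ n) hs

lemma tsum_even_mul_char_div_rpow_nonneg (hf : ∀ n, |f n| ≤ 1) (hf2 : 0 ≤ f 2) {N : ℕ}
    {χ : MulChar (ZMod N) ℤ} (hχ : χ.IsQuadratic) (hs : 1 < s) :
    0 ≤ ∑' n : ℕ, (if 2 ∣ n then f n * (χ (n / 2 : ℕ) : ℤ) else 0) / (n : ℝ) ^ s := by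
  rw [← (mul_right_injective₀ (two_ne_zero' ℕ)).tsum_eq]
  · have hterm (m : ℕ) :
        (if 2 ∣ 2 * m then f (2 * m) * (χ (2 * m / 2 : ℕ) : ℤ) else 0) / ((2 * m : ℕ) : ℝ) ^ s =
          f 2 / 2 ^ s * (f m * (χ m : ℤ) / (m : ℝ) ^ s) := by
      rw [if_pos (dvd_mul_right 2 m), Nat.mul_div_cancel_left m two_pos, map_mul, Nat.cast_mul,
        Real.mul_rpow (Nat.cast_nonneg 2) m.cast_nonneg, mul_assoc, mul_div_mul_comm, Nat.cast_two]
    simp only [hterm, tsum_mul_left]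
    exact mul_nonneg (by positivity) (tsum_mul_char_div_rpow_nonneg hf hχ hs)
  · intro n hn
    obtain ⟨m, rfl⟩ : 2 ∣ n := by
      by_contra h
      simp [h] at hn
    exact ⟨m, rfl⟩

lemma tsum_mul_sin_one_div_eight_div_rpow_nonneg (hf : ∀ n, |f n| ≤ 1) (hf2 : 0 ≤ f 2)
    (hs : 1 < s) :
    0 ≤ ∑' n : ℕ, f n * Real.sin (2 * Real.pi * (1 / 8) * n) / (n : ℝ) ^ s := by
  have hterm (n : ℕ) : f n * Real.sin (2 * Real.pi * (1 / 8) * n) / (n : ℝ) ^ s =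
      √2 / 2 * (f n * (ZMod.χ₈' n : ℤ) / (n : ℝ) ^ s) +
        (if 2 ∣ n then f n * (ZMod.χ₄ (n / 2 : ℕ) : ℤ) else 0) / (n : ℝ) ^ s := by
    rw [sin_two_pi_mul_one_div_eight_mul]
    split_ifs <;> ring
  have heven (n : ℕ) : |if 2 ∣ n then f n * (ZMod.χ₄ (n / 2 : ℕ) : ℤ) else 0| ≤ 1 := by
    split_ifs
    · exact abs_mul_char_le_one (hf n) ZMod.isQuadratic_χ₄ _
    · simp
  have hsum := summable_div_rpow (fun n ↦ abs_mul_char_le_one (hf n) ZMod.isQuadratic_χ₈' n) hs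
  simp only [hterm]
  rw [(hsum.mul_left _).tsum_add (summable_div_rpow heven hs), tsum_mul_left]
  exact add_nonneg
    (mul_nonneg (by positivity) (tsum_mul_char_div_rpow_nonneg hf ZMod.isQuadratic_χ₈' hs))
    (tsum_even_mul_char_div_rpow_nonneg hf hf2 ZMod.isQuadratic_χ₄ hs)

end Positivity

lemma sum_filter_val_le {N m : ℕ} [NeZero N] (hm : m < N) {M : Type*} [AddCommMonoid M]
    {f : ℕ → M} (hf : f 0 = 0) :
    ∑ a : ZMod N with a.val ≤ m, f a.val = ∑ n ∈ Finset.Icc 1 m, f n := by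
  have hval (n : ℕ) (hn : n ∈ Finset.range (m + 1)) : (n : ZMod N).val = n :=
    ZMod.val_cast_of_lt ((Finset.mem_range_succ_iff.1 hn).trans_lt hm)
  have hrange : ∑ n ∈ Finset.Icc 1 m, f n = ∑ n ∈ Finset.range (m + 1), f n := by
    rw [Finset.range_eq_Ico, Finset.sum_eq_sum_Ico_succ_bot m.succ_pos, hf, zero_add]
    rfl
  rw [hrange]
  exact Finset.sum_nbij' ZMod.val (↑) (by simp) (by simp +contextual [hval]) (by simp)
    hval (by simp)

section LegendreSymbol

open Filter Topology Complex
open scoped ComplexOrder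

variable {p : ℕ} [Fact p.Prime]

variable (p) in
/-- The Legendre symbol modulo `p` as a complex Dirichlet character. -/
noncomputable def legendreCharacter : DirichletCharacter ℂ p :=
  (quadraticChar (ZMod p)).ringHomComp (Int.castRingHom ℂ)

lemma legendreCharacter_intCast (n : ℤ) : legendreCharacter p n = legendreSym p n := rfl

lemma legendreCharacter_inv : (legendreCharacter p)⁻¹ = legendreCharacter p :=
  ((quadraticChar_isQuadratic _).comp _).inv

lemma legendreCharacter_ne_one (hp : p ≠ 2) : legendreCharacter p ≠ 1 :=
  (MulChar.ringHomComp_ne_one_iff (RingHom.injective_int _)).2 <|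
    quadraticChar_ne_one ((ZMod.ringChar_zmod_n p).trans_ne hp)

lemma legendreCharacter_even (hp : p % 4 = 1) : (legendreCharacter p).Even := by
  have hneg := legendreSym.at_neg_one (p := p) (by omega)
  rw [ZMod.χ₄_nat_one_mod_four hp] at hneg
  simpa [hneg, DirichletCharacter.Even] using legendreCharacter_intCast (p := p) (-1)

lemma gaussSum_legendreCharacter_pos (hp : p % 4 = 1) :
    0 < gaussSum (legendreCharacter p) ZMod.stdAddChar := by
  have hψ : (ZMod.stdAddChar : AddChar (ZMod p) ℂ) ≠ 1 := by
    simpa using ZMod.isPrimitive_stdAddChar p one_ne_zero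
  have hchar : ringChar (ZMod p) ≠ 2 := (ZMod.ringChar_zmod_n p).trans_ne (by omega)
  rw [legendreCharacter, gaussSum_quadraticChar_eq_sum_sq hchar hψ]
  exact sum_stdAddChar_sq_pos hp

lemma tsum_legendreSym_mul_sin_nonneg (hp : p % 8 = 1) {s : ℝ} (hs : 1 < s) :
    0 ≤ ∑' n : ℕ, (legendreSym p n : ℝ) * Real.sin (2 * Real.pi * (1 / 8) * n) / (n : ℝ) ^ s := by
  let f : ℕ →*₀ ℝ := (Int.castRingHom ℝ).toMonoidWithZeroHom.comp
    ((legendreSym.hom p).comp (Nat.castRingHom ℤ).toMonoidWithZeroHom)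
  have hf (n : ℕ) : |f n| ≤ 1 := by
    change |(legendreSym p n : ℝ)| ≤ 1
    rcases quadraticChar_isQuadratic (ZMod p) (n : ℤ) with h | h | h <;>
      (rw [legendreSym, h]; simp)
  have hf2 : f 2 = 1 := by
    have htwo : legendreSym p 2 = 1 := by
      rw [legendreSym.at_two (by omega), ZMod.χ₈_nat_eq_if_mod_eight, if_neg (by omega),
        if_pos (.inl hp)]
    exact (congrArg (Int.cast (R := ℝ)) htwo).trans Int.cast_one
  exact tsum_mul_sin_one_div_eight_div_rpow_nonneg hf (hf2 ▸ zero_le_one) hs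

lemma ofReal_tsum_legendreSym_mul_sin (x s : ℝ) :
    ((∑' n : ℕ, (legendreSym p n : ℝ) * Real.sin (2 * Real.pi * x * n) / (n : ℝ) ^ s : ℝ) : ℂ) =
      ∑' n : ℕ, legendreCharacter p n * Real.sin (2 * Real.pi * x * n) / (n : ℂ) ^ (s : ℂ) := by
  rw [ofReal_tsum]
  refine tsum_congr fun n ↦ ?_
  rw [ofReal_div, ofReal_mul, ofReal_cpow n.cast_nonneg, ofReal_natCast, ofReal_intCast,
    ← legendreCharacter_intCast, Int.cast_natCast]

lemma sum_legendreSym_val_nonneg (hp : p % 4 = 1) {x : ℝ} (hx : x ∈ Set.Ico 0 1)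
    (hpx : ∀ k : ℤ, p * x ≠ k)
    (hseries : ∀ s : ℝ, 1 < s →
      0 ≤ ∑' n : ℕ, (legendreSym p n : ℝ) * Real.sin (2 * Real.pi * x * n) / (n : ℝ) ^ s) :
    0 ≤ ∑ a : ZMod p with a.val < p * x, legendreSym p a.val := by
  have hχ1 : legendreCharacter p ≠ 1 := legendreCharacter_ne_one (by omega)
  have hlim := tendsto_gaussSum_mul_tsum_char_mul_sin (legendreCharacter_even hp) hχ1
    (isPrimitive_of_prime_level hχ1) hx hpx
  have hlim_nonneg := ge_of_tendsto hlim <| eventually_mem_nhdsWithin.mono fun s hs ↦ by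
    rw [legendreCharacter_inv, ← ofReal_tsum_legendreSym_mul_sin]
    exact mul_nonneg (gaussSum_legendreCharacter_pos hp).le (zero_le_real.2 (hseries s hs))
  have hsum : (Real.pi * ∑ a : ZMod p with a.val < p * x, legendreCharacter p a : ℂ) =
      (Real.pi * (∑ a : ZMod p with a.val < p * x, legendreSym p a.val : ℤ) : ℝ) := by
    push_cast [← legendreCharacter_intCast, ZMod.natCast_zmod_val]
    rfl
  rw [hsum, zero_le_real] at hlim_nonneg
  exact_mod_cast nonneg_of_mul_nonneg_right hlim_nonneg Real.pi_pos

end LegendreSymbol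

/-- For every prime `p ≡ 1 (mod 8)`, the sum `∑_{n=1}^{⌊p/8⌋} (n/p)` of
Legendre symbols is nonnegative. -/
theorem stmt_12 (p : ℕ) [Fact p.Prime] (hp : p % 8 = 1) :
    0 ≤ ∑ n ∈ Finset.Icc 1 (p / 8), legendreSym p (n : ℤ) := by
  have hnotint (k : ℤ) : (p : ℝ) * (1 / 8) ≠ k := fun h ↦ by
    have : (p : ℤ) = k * 8 := by
      exact_mod_cast (by linarith : (p : ℝ) = k * 8)
    omega
  have hlt (n : ℕ) : (n : ℝ) < p * (1 / 8) ↔ n ≤ p / 8 := by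
    rw [mul_one_div, lt_div_iff₀ (by norm_num)]
    norm_cast
    omega
  have hnonneg := sum_legendreSym_val_nonneg (p := p) (x := 1 / 8) (by omega) (by norm_num) hnotint
    fun s hs ↦ tsum_legendreSym_mul_sin_nonneg hp hs
  simp only [hlt] at hnonneg
  rwa [sum_filter_val_le (f := fun n ↦ legendreSym p n) (by omega) (by simp)] at hnonneg
end
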